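/- arXiv:2011.01610 — 7 statements merged into one kernel-verified Lean document; each statement's English description precedes it below -/
import Mathlib

section
/- Let I = (i₋, i₊) ⊆ ℝ be an open interval, P a smooth nonnegative function on I, and Q a smooth strictly increasing function on I with lim_{x→i₋} Q(x) < 0 and lim_{x→i₊} Q(x) > 0. Let f_∞ be a probability density on I satisfying the stationary equation d/dx (P(x) f_∞(x)) + Q(x) f_∞(x) = 0 for all x ∈ I, and set w(x) = P(x)/Q'(x). Then for every random variable X with density f_∞ and every smooth function φ on I such that φ(X) has finite variance, Var[φ(X)] ≤ E[w(X) (φ'(X))²], i.e. ∫_I φ²(x) f_∞(x) dx − (∫_I φ(x) f_∞(x) dx)² ≤ ∫_I w(x) (φ'(x))² f_∞(x) dx. -/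
open MeasureTheory Set Filter

section CWHelpers
open Topology

lemma cw_zero {a b : ℝ} (Q q p : ℝ → ℝ)
    (hQd : ∀ x ∈ Icc a b, HasDerivAt Q (q x) x)
    (hqd : ∀ x ∈ Icc a b, DifferentiableAt ℝ q x)
    (hpc : ContinuousOn p (Icc a b))
    (hQm : StrictMonoOn Q (Icc a b))
    (hq0 : ∀ x ∈ Icc a b, 0 ≤ q x)
    (hint : IntegrableOn (fun x => p x ^ 2 / q x) (Icc a b))
    {z : ℝ} (hz : z ∈ Ico a b) (hqz : q z = 0) : p z = 0 := by
  by_contra hpz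
  have hzI : z ∈ Icc a b := ⟨hz.1, hz.2.le⟩
  -- neighbourhood where p^2 is bounded below
  set m := p z ^ 2 / 2 with hm
  have hpos : 0 < p z ^ 2 := by positivity
  have hmpos : 0 < m := by positivity
  have hev : ∀ᶠ x in 𝓝[Icc a b] z, m < p x ^ 2 :=
    ((hpc z hzI).pow 2).eventually (lt_mem_nhds (by show m < p z ^ 2; linarith))
  obtain ⟨d, hzd, hd⟩ : ∃ d, z < d ∧ d ≤ b ∧ ∀ x ∈ Icc z d, m < p x ^ 2 := by
    rw [eventually_nhdsWithin_iff, Metric.eventually_nhds_iff] at hev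
    obtain ⟨ε, hε, h⟩ := hev
    refine ⟨min b (z + ε / 2), lt_min hz.2 (by linarith), min_le_left _ _, fun x hx => ?_⟩
    have h1 := hx.2.trans (min_le_left _ _)
    have h2 := hx.2.trans (min_le_right _ _)
    refine h ?_ ⟨hz.1.trans hx.1, h1⟩
    rw [Real.dist_eq, abs_lt]
    constructor <;> linarith [hx.1]
  obtain ⟨hdb, hd⟩ := hd
  have hsub : Icc z d ⊆ Icc a b := Icc_subset_Icc hz.1 hdb
  -- a point with q > 0
  obtain ⟨c, hc, hqc⟩ : ∃ c ∈ Ioo z d, q c = (Q d - Q z) / (d - z) :=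
    exists_hasDerivAt_eq_slope Q q hzd
      (fun x hx => (hQd x (hsub hx)).continuousAt.continuousWithinAt)
      (fun x hx => hQd x (hsub (Ioo_subset_Icc_self hx)))
  have hqcpos : 0 < q c := by
    rw [hqc]
    exact div_pos (sub_pos.2 (hQm hzI (hsub ⟨hzd.le, le_rfl⟩) hzd)) (sub_pos.2 hzd)
  -- last zero before c
  have hqcont : ContinuousOn q (Icc z c) := fun x hx =>
    (hqd x (hsub ⟨hx.1, hx.2.trans hc.2.le⟩)).continuousAt.continuousWithinAt
  have hcomp : IsCompact (Icc z c ∩ q ⁻¹' {0}) :=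
    isCompact_Icc.of_isClosed_subset
      (hqcont.preimage_isClosed_of_isClosed isClosed_Icc isClosed_singleton) inter_subset_left
  obtain ⟨e, he⟩ := hcomp.exists_isGreatest ⟨z, ⟨le_rfl, hc.1.le⟩, hqz⟩
  have hqe : q e = 0 := he.1.2
  have hzc := he.1.1
  have hec : e < c := lt_of_le_of_ne hzc.2 (by rintro rfl; linarith)
  have hsub2 : Icc e c ⊆ Icc z d := Icc_subset_Icc hzc.1 hc.2.le
  have hposq : ∀ x ∈ Ioc e c, 0 < q x := by
    intro x hx
    have hx' : x ∈ Icc e c := Ioc_subset_Icc_self hx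
    refine lt_of_le_of_ne (hq0 x (hsub (hsub2 hx'))) fun h => ?_
    exact absurd (he.2 ⟨⟨hzc.1.trans hx.1.le, hx.2⟩, h.symm⟩) (not_le.2 hx.1)
  have heab : e ∈ Icc a b := hsub (hsub2 ⟨le_rfl, hec.le⟩)
  have hO := (hqd e heab).hasDerivAt.isBigO_sub
  obtain ⟨C, hC, hO⟩ := hO.exists_pos
  have hO := hO.bound
  have hIoc : ∀ᶠ x in 𝓝[>] e, x ∈ Ioc e c :=
    Ioc_mem_nhdsGT hec
  refine not_integrableOn_of_tendsto_norm_atTop_of_deriv_isBigO_filter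
    (l := 𝓝[>] e) (k := Icc a b) (f := fun x => Real.log (x - e))
    (g := fun x => p x ^ 2 / q x) ?_ ?_ ?_ ?_ hint
  · filter_upwards [hIoc] with x hx using hsub (hsub2 (Ioc_subset_Icc_self hx))
  · filter_upwards [hIoc] with x hx
    have : x - e ≠ 0 := sub_ne_zero.2 hx.1.ne'
    fun_prop (disch := assumption)
  · have h1 : Tendsto (fun x => x - e) (𝓝[>] e) (𝓝[>] 0) := by
      refine tendsto_nhdsWithin_iff.2 ⟨?_, ?_⟩
      · have : Tendsto (fun x => x - e) (𝓝 e) (𝓝 (e - e)) := (continuous_id.sub continuous_const).tendsto e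
        rw [sub_self] at this
        exact this.mono_left nhdsWithin_le_nhds
      · filter_upwards [self_mem_nhdsWithin] with x hx using sub_pos.2 (mem_Ioi.1 hx)
    exact tendsto_abs_atBot_atTop.comp (Real.tendsto_log_nhdsGT_zero.comp h1)
  · refine Asymptotics.IsBigO.of_bound (C / m) ?_
    filter_upwards [hIoc, nhdsWithin_le_nhds hO] with x hx hb
    have hxe : 0 < x - e := sub_pos.2 hx.1
    have hqx := hposq x hx
    have hp := hd x (hsub2 (Ioc_subset_Icc_self hx))
    have hder : deriv (fun x => Real.log (x - e)) x = 1 / (x - e) :=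
      (((hasDerivAt_id x).sub_const e).log hxe.ne').deriv
    rw [hqe, sub_zero, Real.norm_of_nonneg hqx.le, Real.norm_of_nonneg hxe.le] at hb
    rw [hder, Real.norm_of_nonneg (by positivity), Real.norm_of_nonneg (by positivity)]
    rw [div_mul_div_comm, div_le_div_iff₀ hxe (by positivity)]
    nlinarith [mul_pos hC hxe, mul_le_mul_of_nonneg_left hb hmpos.le, mul_lt_mul_of_pos_left hp (mul_pos hC hxe)]

lemma cw_cs {a b : ℝ} (hab : a < b) (Q q φ p : ℝ → ℝ)
    (hQd : ∀ x ∈ Icc a b, HasDerivAt Q (q x) x)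
    (hqd : ∀ x ∈ Icc a b, DifferentiableAt ℝ q x)
    (hφd : ∀ x ∈ Icc a b, HasDerivAt φ (p x) x)
    (hpc : ContinuousOn p (Icc a b))
    (hQm : StrictMonoOn Q (Icc a b))
    (hQa : Q a = 0)
    (hq0 : ∀ x ∈ Icc a b, 0 ≤ q x)
    (hint : IntegrableOn (fun x => p x ^ 2 / q x) (Icc a b)) :
    (φ b - φ a) ^ 2 ≤ Q b * ∫ x in Ioc a b, p x ^ 2 / q x := by
  have hQb : 0 < Q b := hQa ▸ hQm ⟨le_rfl, hab.le⟩ ⟨hab.le, le_rfl⟩ hab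
  have hu : uIcc a b = Icc a b := uIcc_of_le hab.le
  have hqc : ContinuousOn q (Icc a b) := fun x hx => (hqd x hx).continuousAt.continuousWithinAt
  have iq : IntervalIntegrable q volume a b := ContinuousOn.intervalIntegrable (by rwa [hu])
  have ip : IntervalIntegrable p volume a b := ContinuousOn.intervalIntegrable (by rwa [hu])
  have ig : IntervalIntegrable (fun x => p x ^ 2 / q x) volume a b :=
    (intervalIntegrable_iff_integrableOn_Icc_of_le hab.le).2 hint
  have e1 : ∫ x in a..b, q x = Q b - Q a :=
    intervalIntegral.integral_eq_sub_of_hasDerivAt (by rwa [hu]) iq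
  have e2 : ∫ x in a..b, p x = φ b - φ a :=
    intervalIntegral.integral_eq_sub_of_hasDerivAt (by rwa [hu]) ip
  set d := φ b - φ a
  set l := d / Q b with hl
  have key : ∫ x in a..b, 2 * l * p x ≤ ∫ x in a..b, (l ^ 2 * q x + p x ^ 2 / q x) := by
    refine intervalIntegral.integral_mono_on_of_le_Ioo hab.le (ip.const_mul _)
      ((iq.const_mul _).add ig) fun x hx => ?_
    have hx' := Ioo_subset_Icc_self hx
    rcases (hq0 x hx').eq_or_lt with h | h
    · rw [cw_zero Q q p hQd hqd hpc hQm hq0 hint ⟨hx'.1, hx.2⟩ h.symm, ← h]; simp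
    · have : p x ^ 2 / q x * q x = p x ^ 2 := div_mul_cancel₀ _ h.ne'
      have h3 : 0 ≤ (l * q x - p x) ^ 2 / q x := by positivity
      have h4 : (l * q x - p x) ^ 2 / q x = l ^ 2 * q x + p x ^ 2 / q x - 2 * l * p x := by
        field_simp; ring
      linarith
  rw [intervalIntegral.integral_add (iq.const_mul _) ig, intervalIntegral.integral_const_mul,
    intervalIntegral.integral_const_mul, e1, e2, hQa, sub_zero,
    intervalIntegral.integral_of_le hab.le] at key
  set G := ∫ x in Ioc a b, p x ^ 2 / q x
  have : l * Q b = d := div_mul_cancel₀ _ hQb.ne'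
  have h5 : l * d ≤ G := by
    have : l ^ 2 * Q b = l * d := by rw [← this]; ring
    linarith
  calc d ^ 2 = Q b * (l * d) := by rw [← this]; ring
    _ ≤ _ := by gcongr

lemma cw_half {I : Set ℝ} (hIo : IsOpen I) (hIc : I.OrdConnected) (P Q q f φ p : ℝ → ℝ)
    (hP0 : ∀ x ∈ I, 0 ≤ P x)
    (hQd : ∀ x ∈ I, HasDerivAt Q (q x) x)
    (hqd : ∀ x ∈ I, DifferentiableAt ℝ q x)
    (hφd : ∀ x ∈ I, HasDerivAt φ (p x) x)
    (hpc : ContinuousOn p I)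
    (hQm : StrictMonoOn Q I)
    (hq0 : ∀ x ∈ I, 0 ≤ q x)
    (hf0 : ∀ x ∈ I, 0 ≤ f x)
    (hfi : IntegrableOn f I)
    (hF : ∀ x ∈ I, HasDerivAt (fun y => P y * f y) (-(Q x * f x)) x)
    (hint : IntegrableOn (fun x => P x / q x * p x ^ 2 * f x) I)
    {a : ℝ} (ha : a ∈ I) (hQa : Q a = 0) :
    ∫⁻ x in I ∩ Ioi a, ENNReal.ofReal ((φ x - φ a) ^ 2 * f x)
      ≤ ∫⁻ x in I ∩ Ioi a, ENNReal.ofReal (P x / q x * p x ^ 2 * f x) := by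
  have hQc : ContinuousOn Q I := fun x hx => (hQd x hx).continuousAt.continuousWithinAt
  have hqc : ContinuousOn q I := fun x hx => (hqd x hx).continuousAt.continuousWithinAt
  have hFc : ContinuousOn (fun y => P y * f y) I :=
    fun x hx => (hF x hx).continuousAt.continuousWithinAt
  have hSm : MeasurableSet (I ∩ Ioi a) := hIo.measurableSet.inter measurableSet_Ioi
  have hQpos : ∀ x ∈ I, a < x → 0 < Q x := fun x hx h => hQa ▸ hQm ha hx h
  have hF0 : ∀ x ∈ I, 0 ≤ P x * f x := fun x hx => mul_nonneg (hP0 x hx) (hf0 x hx)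
  -- tail integrals on compact intervals
  have hfQi : ∀ y b, y ∈ I → b ∈ I → IntegrableOn (fun x => f x * Q x) (Icc y b) := by
    intro y b hy hb
    have hs : Icc y b ⊆ I := hIc.out hy hb
    exact (hfi.mono_set hs).mul_continuousOn (hQc.mono hs) isCompact_Icc
  have hftc : ∀ y b, y ∈ I → b ∈ I → y ≤ b →
      ∫ x in y..b, f x * Q x = P y * f y - P b * f b := by
    intro y b hy hb hyb
    have hs : Icc y b ⊆ I := hIc.out hy hb
    have hii : IntervalIntegrable (fun x => f x * Q x) volume y b :=
      (intervalIntegrable_iff_integrableOn_Icc_of_le hyb).2 (hfQi y b hy hb)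
    have := intervalIntegral.integral_eq_sub_of_hasDerivAt
      (f := fun x => -(P x * f x)) (f' := fun x => f x * Q x) (a := y) (b := b)
      (fun x hx => by
        have := (hF x (hs (by rwa [uIcc_of_le hyb] at hx))).neg
        rw [neg_neg, mul_comm] at this
        exact this) hii
    rw [this]; ring
  have hnn : ∀ y b, y ∈ I → b ∈ I → a ≤ y → ∀ x ∈ Icc y b, 0 ≤ f x * Q x := by
    intro y b hy hb hay x hx
    have hxI := hIc.out hy hb hx
    refine mul_nonneg (hf0 x hxI) ?_
    rcases (hay.trans hx.1).eq_or_lt with h | h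
    · rw [← h, hQa]
    · exact (hQpos x hxI h).le
  have hanti : ∀ y b, y ∈ I → b ∈ I → a ≤ y → y ≤ b → P b * f b ≤ P y * f y := by
    intro y b hy hb hay hyb
    have := intervalIntegral.integral_nonneg (μ := volume) hyb (hnn y b hy hb hay)
    rw [hftc y b hy hb hyb] at this
    linarith
  have htail : ∀ y ∈ I ∩ Ioi a,
      ∫⁻ x in I ∩ Ici y, ENNReal.ofReal (f x * Q x) ≤ ENNReal.ofReal (P y * f y) := by
    rintro y ⟨hy, hay⟩
    have hcov : I ∩ Ici y ⊆ ⋃ r : {r : ℚ // (r : ℝ) ∈ I}, Icc y (r : ℝ) := by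
      rintro x ⟨hx, hyx⟩
      obtain ⟨ε, hε, hb⟩ := Metric.isOpen_iff.1 hIo x hx
      obtain ⟨r, hr1, hr2⟩ := exists_rat_btwn (show x < x + ε by linarith)
      refine mem_iUnion.2 ⟨⟨r, hb ?_⟩, hyx, hr1.le⟩
      rw [Metric.mem_ball, Real.dist_eq, abs_lt]; constructor <;> linarith
    refine (lintegral_mono_set hcov).trans ?_
    rw [setLIntegral_iUnion_of_directed]
    · refine iSup_le fun r => ?_
      rcases le_total y (r : ℝ) with h | h
      · rw [← ofReal_integral_eq_lintegral_ofReal (hfQi y r hy r.2)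
          ((ae_restrict_iff' measurableSet_Icc).2 (ae_of_all _ (hnn y r hy r.2 (le_of_lt hay)))),
          integral_Icc_eq_integral_Ioc, ← intervalIntegral.integral_of_le h, hftc y r hy r.2 h]
        exact ENNReal.ofReal_le_ofReal (by linarith [hF0 r r.2])
      · rw [setLIntegral_measure_zero]
        · simp
        · refine measure_mono_null (Icc_subset_Icc_right h) (by simp)
    · intro r s
      rcases le_total (r : ℝ) (s : ℝ) with h | h
      · exact ⟨s, Icc_subset_Icc_right h, le_rfl⟩
      · exact ⟨r, le_rfl, Icc_subset_Icc_right h⟩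
  -- pointwise bound
  have hpt : ∀ x ∈ I ∩ Ioi a, ENNReal.ofReal ((φ x - φ a) ^ 2 * f x) ≤
      ∫⁻ y in I ∩ Ioi a, (Iic x).indicator (fun y => ENNReal.ofReal (f x * Q x) *
        ENNReal.ofReal (p y ^ 2 / q y)) y := by
    rintro x ⟨hx, hax⟩
    have hax : a < x := hax
    rcases (hF0 x hx).eq_or_lt with h0 | hpos
    · have hmin : IsLocalMin (fun y => P y * f y) x := by
        filter_upwards [hIo.mem_nhds hx] with y hy
        rw [← h0]; exact hF0 y hy
      have := hmin.hasDerivAt_eq_zero (hF x hx)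
      have hfx : f x = 0 := by
        rcases mul_eq_zero.1 (neg_eq_zero.1 this) with h | h
        · exact absurd h (hQpos x hx hax).ne'
        · exact h
      simp [hfx]
    · have hs : Icc a x ⊆ I := hIc.out ha hx
      have hFp : ∀ y ∈ Icc a x, 0 < P y * f y := fun y hy =>
        hpos.trans_le (hanti y x (hs hy) hx hy.1 hy.2)
      have hgi : IntegrableOn (fun y => p y ^ 2 / q y) (Icc a x) := by
        have h1 := (hint.mono_set hs).mul_continuousOn
          (ContinuousOn.inv₀ (hFc.mono hs) fun y hy => (hFp y hy).ne') isCompact_Icc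
        refine h1.congr_fun (fun y hy => ?_) measurableSet_Icc
        have := (hFp y hy).ne'
        have hPy : P y ≠ 0 := left_ne_zero_of_mul this
        have hfy : f y ≠ 0 := right_ne_zero_of_mul this
        simp only [Pi.inv_apply, mul_inv, div_eq_mul_inv]
        calc P y * (q y)⁻¹ * p y ^ 2 * f y * ((P y)⁻¹ * (f y)⁻¹)
            = (P y * (P y)⁻¹) * (f y * (f y)⁻¹) * (p y ^ 2 * (q y)⁻¹) := by ring
          _ = _ := by rw [mul_inv_cancel₀ hPy, mul_inv_cancel₀ hfy]; ring
      have hcs := cw_cs hax Q q φ p (fun y hy => hQd y (hs hy)) (fun y hy => hqd y (hs hy))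
        (fun y hy => hφd y (hs hy)) (hpc.mono hs) (hQm.mono hs) hQa (fun y hy => hq0 y (hs hy)) hgi
      have hset : (I ∩ Ioi a) ∩ Iic x = Ioc a x := by
        ext y; constructor
        · rintro ⟨⟨_, h1⟩, h2⟩; exact ⟨h1, h2⟩
        · rintro ⟨h1, h2⟩; exact ⟨⟨hs ⟨h1.le, h2⟩, h1⟩, h2⟩
      rw [lintegral_indicator measurableSet_Iic, Measure.restrict_restrict measurableSet_Iic,
        inter_comm, hset, lintegral_const_mul' _ _ ENNReal.ofReal_ne_top,
        ← ofReal_integral_eq_lintegral_ofReal (hgi.mono_set Ioc_subset_Icc_self)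
          ((ae_restrict_iff' measurableSet_Ioc).2 (ae_of_all _ fun y hy =>
            div_nonneg (sq_nonneg _) (hq0 y (hs (Ioc_subset_Icc_self hy))))),
        ← ENNReal.ofReal_mul (mul_nonneg (hf0 x hx) (hQpos x hx hax).le)]
      refine ENNReal.ofReal_le_ofReal ?_
      nlinarith [mul_le_mul_of_nonneg_left hcs (hf0 x hx)]
  refine (setLIntegral_mono' hSm hpt).trans ?_
  have hfm : AEMeasurable f (volume.restrict (I ∩ Ioi a)) :=
    (hfi.mono_set inter_subset_left).aestronglyMeasurable.aemeasurable
  have hQme : AEMeasurable Q (volume.restrict (I ∩ Ioi a)) :=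
    (hQc.mono inter_subset_left).aemeasurable hSm
  have hqme : AEMeasurable q (volume.restrict (I ∩ Ioi a)) :=
    (hqc.mono inter_subset_left).aemeasurable hSm
  have hpme : AEMeasurable p (volume.restrict (I ∩ Ioi a)) :=
    (hpc.mono inter_subset_left).aemeasurable hSm
  have hm1 : AEMeasurable (fun x => ENNReal.ofReal (f x * Q x)) (volume.restrict (I ∩ Ioi a)) :=
    (hfm.mul hQme).ennreal_ofReal
  have hm2 : AEMeasurable (fun x => ENNReal.ofReal (p x ^ 2 / q x))
      (volume.restrict (I ∩ Ioi a)) :=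
    ((hpme.pow_const 2).div hqme).ennreal_ofReal
  rw [lintegral_lintegral_swap]
  · refine setLIntegral_mono' hSm fun y hy => ?_
    have e : ∀ x, (Iic x).indicator (fun y => ENNReal.ofReal (f x * Q x) *
        ENNReal.ofReal (p y ^ 2 / q y)) y = (Ici y).indicator (fun x => ENNReal.ofReal (f x * Q x) *
        ENNReal.ofReal (p y ^ 2 / q y)) x := by
      intro x
      by_cases h : y ≤ x <;> simp [indicator, h]
    simp_rw [e]
    rw [lintegral_indicator measurableSet_Ici, Measure.restrict_restrict measurableSet_Ici,
      lintegral_mul_const' _ _ ENNReal.ofReal_ne_top]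
    calc _ ≤ ENNReal.ofReal (P y * f y) * ENNReal.ofReal (p y ^ 2 / q y) := by
          gcongr
          refine le_trans (lintegral_mono_set ?_) (htail y hy)
          rintro x ⟨h1, h2, _⟩; exact ⟨h2, h1⟩
      _ = _ := by
          rw [← ENNReal.ofReal_mul (hF0 y hy.1)]
          congr 1; ring
  · have : (Function.uncurry fun x y => (Iic x).indicator (fun y => ENNReal.ofReal (f x * Q x) *
        ENNReal.ofReal (p y ^ 2 / q y)) y) = {z : ℝ × ℝ | z.2 ≤ z.1}.indicator
          (fun z => ENNReal.ofReal (f z.1 * Q z.1) * ENNReal.ofReal (p z.2 ^ 2 / q z.2)) := by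
      ext ⟨x, y⟩
      by_cases h : y ≤ x <;> simp [indicator, h]
    rw [this]
    refine AEMeasurable.indicator ?_ (measurableSet_le measurable_snd measurable_fst)
    exact hm1.comp_fst.mul hm2.comp_snd

lemma cw_half_left {I : Set ℝ} (hIo : IsOpen I) (hIc : I.OrdConnected) (P Q q f φ p : ℝ → ℝ)
    (hP0 : ∀ x ∈ I, 0 ≤ P x)
    (hQd : ∀ x ∈ I, HasDerivAt Q (q x) x)
    (hqd : ∀ x ∈ I, DifferentiableAt ℝ q x)
    (hφd : ∀ x ∈ I, HasDerivAt φ (p x) x)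
    (hpc : ContinuousOn p I)
    (hQm : StrictMonoOn Q I)
    (hq0 : ∀ x ∈ I, 0 ≤ q x)
    (hf0 : ∀ x ∈ I, 0 ≤ f x)
    (hfi : IntegrableOn f I)
    (hF : ∀ x ∈ I, HasDerivAt (fun y => P y * f y) (-(Q x * f x)) x)
    (hint : IntegrableOn (fun x => P x / q x * p x ^ 2 * f x) I)
    {a : ℝ} (ha : a ∈ I) (hQa : Q a = 0) :
    ∫⁻ x in I ∩ Iio a, ENNReal.ofReal ((φ x - φ a) ^ 2 * f x)
      ≤ ∫⁻ x in I ∩ Iio a, ENNReal.ofReal (P x / q x * p x ^ 2 * f x) := by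
  have hmp := Measure.measurePreserving_neg (volume : Measure ℝ)
  have hemb : MeasurableEmbedding (Neg.neg : ℝ → ℝ) := (MeasurableEquiv.neg ℝ).measurableEmbedding
  have hset : (Neg.neg : ℝ → ℝ) ⁻¹' (I ∩ Iio a) = (Neg.neg ⁻¹' I) ∩ Ioi (-a) := by
    ext x; simp
  have hii : ∀ g : ℝ → ℝ, IntegrableOn g I → IntegrableOn (fun x => g (-x)) (Neg.neg ⁻¹' I) :=
    fun g hg => (hmp.integrableOn_comp_preimage hemb).2 hg
  have key := cw_half (I := Neg.neg ⁻¹' I) (hIo.preimage continuous_neg)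
    ⟨fun x hx y hy z hz => hIc.out hy hx ⟨neg_le_neg hz.2, neg_le_neg hz.1⟩⟩
    (fun x => P (-x)) (fun x => -Q (-x)) (fun x => q (-x)) (fun x => f (-x))
    (fun x => φ (-x)) (fun x => -p (-x))
    (fun x hx => hP0 _ hx)
    (fun x hx => by
      refine HasDerivAt.congr_deriv (((hQd _ hx).comp x (hasDerivAt_neg x)).neg) ?_
      simp)
    (fun x hx => (hqd _ hx).comp x differentiableAt_id.neg)
    (fun x hx => by
      refine HasDerivAt.congr_deriv ((hφd _ hx).comp x (hasDerivAt_neg x)) ?_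
      simp)
    ((hpc.comp continuous_neg.continuousOn (fun x hx => hx)).neg)
    (fun x hx y hy h => neg_lt_neg (hQm hy hx (neg_lt_neg h)))
    (fun x hx => hq0 _ hx) (fun x hx => hf0 _ hx) (hii f hfi)
    (fun x hx => by
      refine HasDerivAt.congr_deriv ((hF _ hx).comp x (hasDerivAt_neg x)) ?_
      simp)
    (by simpa using hii _ hint) (a := -a) (by simpa using ha) (by simpa using hQa)
  rw [← hset] at key
  simp only [neg_neg, neg_sq] at key
  rw [hmp.setLIntegral_comp_preimage_emb hemb
      (fun x => ENNReal.ofReal ((φ x - φ a) ^ 2 * f x)),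
    hmp.setLIntegral_comp_preimage_emb hemb
      (fun x => ENNReal.ofReal (P x / q x * p x ^ 2 * f x))] at key
  exact key

end CWHelpers

/-- **Chernoff-type inequality with weight** (Theorem 2.1).
Let `I = (ia, ib) ⊆ ℝ` be an open interval (with possibly infinite endpoints),
`P` a smooth nonnegative function on `I`, `Q` a smooth strictly increasing function
on `I` which is negative near `ia` and positive near `ib` (i.e. its limits at the
endpoints satisfy `lim_{x→ia} Q < 0 < lim_{x→ib} Q`; for a strictly increasing `Q`
this is equivalent to `Q` taking a negative and a positive value on `I`).
If `finf` is a probability density on `I` satisfying the stationary Fokker–Planck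
equation `(P finf)' + Q finf = 0` on `I`, and `w = P / Q'`, then for every smooth `φ`
such that `φ(X)` has finite variance,
`Var[φ(X)] ≤ E[w(X) (φ'(X))²]` (whenever the right-hand side is finite). -/
theorem chernoff_with_weight
    (ia ib : EReal) (hii : ia < ib)
    (I : Set ℝ) (hI : I = {x : ℝ | ia < (x : EReal) ∧ (x : EReal) < ib})
    (P Q finf φ : ℝ → ℝ)
    (hPsmooth : ContDiffOn ℝ (⊤ : ℕ∞) P I)
    (hQsmooth : ContDiffOn ℝ (⊤ : ℕ∞) Q I)
    (hPnonneg : ∀ x ∈ I, 0 ≤ P x)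
    (hQmono : StrictMonoOn Q I)
    (hQleft : ∃ x ∈ I, Q x < 0)
    (hQright : ∃ x ∈ I, 0 < Q x)
    (hfinfnonneg : ∀ x ∈ I, 0 ≤ finf x)
    (hfinfprob : ∫ x in I, finf x = 1)
    (hstationary : ∀ x ∈ I, HasDerivAt (fun y => P y * finf y) (-(Q x * finf x)) x)
    (hφsmooth : ContDiffOn ℝ (⊤ : ℕ∞) φ I)
    (hvar : IntegrableOn (fun x => φ x ^ 2 * finf x) I)
    (hrhs : IntegrableOn (fun x => (P x / deriv Q x) * (deriv φ x) ^ 2 * finf x) I) :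
    (∫ x in I, φ x ^ 2 * finf x) - (∫ x in I, φ x * finf x) ^ 2
      ≤ ∫ x in I, (P x / deriv Q x) * (deriv φ x) ^ 2 * finf x := by
  have hIo : IsOpen I := by
    rw [hI]
    exact (isOpen_Ioo (a := ia) (b := ib)).preimage continuous_coe_real_ereal
  have hIc : I.OrdConnected := by
    rw [hI]
    refine ⟨fun x hx y hy z hz => ⟨hx.1.trans_le ?_, lt_of_le_of_lt ?_ hy.2⟩⟩
    · exact_mod_cast hz.1
    · exact_mod_cast hz.2
  have hfi : IntegrableOn finf I := by
    by_contra h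
    rw [integral_undef h] at hfinfprob
    exact zero_ne_one hfinfprob
  have hQd : ∀ x ∈ I, HasDerivAt Q (deriv Q x) x := fun x hx =>
    ((hQsmooth.differentiableOn (by simp)).differentiableAt (hIo.mem_nhds hx)).hasDerivAt
  have hφd : ∀ x ∈ I, HasDerivAt φ (deriv φ x) x := fun x hx =>
    ((hφsmooth.differentiableOn (by simp)).differentiableAt (hIo.mem_nhds hx)).hasDerivAt
  have hpc : ContinuousOn (deriv φ) I := hφsmooth.continuousOn_deriv_of_isOpen hIo (by simp)
  have hqd : ∀ x ∈ I, DifferentiableAt ℝ (deriv Q) x := by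
    have h2 : ContDiffOn ℝ 1 (deriv Q) I := hQsmooth.deriv_of_isOpen hIo (by
      norm_cast)
    exact fun x hx => (h2.differentiableOn (by simp)).differentiableAt (hIo.mem_nhds hx)
  have hq0 : ∀ x ∈ I, 0 ≤ deriv Q x := fun x hx => by
    rw [← derivWithin_of_isOpen hIo hx]
    exact hQmono.monotoneOn.derivWithin_nonneg
  obtain ⟨a, ha, hQa⟩ : ∃ a ∈ I, Q a = 0 := by
    obtain ⟨l, hl, hl0⟩ := hQleft
    obtain ⟨r, hr, hr0⟩ := hQright
    have := hIc.isPreconnected.intermediate_value hl hr hQsmooth.continuousOn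
    obtain ⟨a, ha, h⟩ := this ⟨hl0.le, hr0.le⟩
    exact ⟨a, ha, h⟩
  have hR := cw_half hIo hIc P Q (deriv Q) finf φ (deriv φ) hPnonneg hQd hqd hφd hpc hQmono hq0
    hfinfnonneg hfi hstationary hrhs ha hQa
  have hL := cw_half_left hIo hIc P Q (deriv Q) finf φ (deriv φ) hPnonneg hQd hqd hφd hpc hQmono hq0
    hfinfnonneg hfi hstationary hrhs ha hQa
  have hImeas := hIo.measurableSet
  have hsplit : ∀ g : ℝ → ENNReal,
      ∫⁻ x in I, g x = (∫⁻ x in I ∩ Iio a, g x) + ∫⁻ x in I ∩ Ioi a, g x := by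
    intro g
    rw [← lintegral_inter_add_sdiff g I (measurableSet_Iio (a := a))]
    congr 1
    refine setLIntegral_congr ?_
    have : I \ Iio a = I ∩ Ici a := by ext; simp
    rw [this]
    exact (Filter.EventuallyEq.refl _ _).inter Ioi_ae_eq_Ici.symm
  have hall : ∫⁻ x in I, ENNReal.ofReal ((φ x - φ a) ^ 2 * finf x)
      ≤ ∫⁻ x in I, ENNReal.ofReal (P x / deriv Q x * deriv φ x ^ 2 * finf x) := by
    rw [hsplit, hsplit]; exact add_le_add hL hR
  have hφf : IntegrableOn (fun x => φ x * finf x) I := by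
    refine Integrable.mono' (hvar.add hfi)
      ((hφsmooth.continuousOn.aestronglyMeasurable hImeas).mul hfi.aestronglyMeasurable) ?_
    refine (ae_restrict_iff' hImeas).2 (ae_of_all _ fun x hx => ?_)
    have h0 := hfinfnonneg x hx
    rw [norm_mul, Real.norm_of_nonneg h0, Real.norm_eq_abs]
    show |φ x| * finf x ≤ φ x ^ 2 * finf x + finf x
    have : |φ x| ≤ φ x ^ 2 + 1 := by
      rw [← sq_abs]; nlinarith [sq_nonneg (|φ x| - 1), abs_nonneg (φ x)]
    nlinarith [mul_le_mul_of_nonneg_right this h0]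
  have hexp : (fun x => (φ x - φ a) ^ 2 * finf x) = fun x =>
      φ x ^ 2 * finf x - 2 * φ a * (φ x * finf x) + φ a ^ 2 * finf x := by
    funext x; ring
  have i1 : IntegrableOn (fun x => φ x ^ 2 * finf x - 2 * φ a * (φ x * finf x)) I :=
    hvar.sub (hφf.const_mul _)
  have i2 : IntegrableOn (fun x => φ a ^ 2 * finf x) I := hfi.const_mul _
  have hLi : IntegrableOn (fun x => (φ x - φ a) ^ 2 * finf x) I := by
    rw [hexp]; exact i1.add i2
  have hval : ∫ x in I, (φ x - φ a) ^ 2 * finf x = (∫ x in I, φ x ^ 2 * finf x)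
      - 2 * φ a * (∫ x in I, φ x * finf x) + φ a ^ 2 := by
    rw [hexp, integral_add i1 i2, integral_sub hvar (hφf.const_mul _), integral_const_mul,
      integral_const_mul, hfinfprob, mul_one]
  have hR0 : 0 ≤ᵐ[volume.restrict I]
      fun x => P x / deriv Q x * deriv φ x ^ 2 * finf x :=
    (ae_restrict_iff' hImeas).2 (ae_of_all _ fun x hx =>
      mul_nonneg (mul_nonneg (div_nonneg (hPnonneg x hx) (hq0 x hx)) (sq_nonneg _))
        (hfinfnonneg x hx))
  have hL0 : 0 ≤ᵐ[volume.restrict I] fun x => (φ x - φ a) ^ 2 * finf x :=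
    (ae_restrict_iff' hImeas).2 (ae_of_all _ fun x hx =>
      mul_nonneg (sq_nonneg _) (hfinfnonneg x hx))
  rw [← ofReal_integral_eq_lintegral_ofReal hLi hL0,
    ← ofReal_integral_eq_lintegral_ofReal hrhs hR0,
    ENNReal.ofReal_le_ofReal_iff (integral_nonneg_of_ae hR0), hval] at hall
  nlinarith [sq_nonneg ((∫ x in I, φ x * finf x) - φ a)]
end

section
/- Let V be a smooth strictly convex function on an open interval I ⊆ ℝ (so V''(x) > 0 on I), and suppose f_∞(x) = C exp(−V(x)) is a probability density on I for some normalizing constant C > 0; assume V'(x) → −∞-side negativity and positivity conditions, namely lim_{x→i₋} V'(x) < 0 and lim_{x→i₊} V'(x) > 0 where I = (i₋,i₊). Then for every random variable X with density f_∞ and every smooth function φ on I with φ(X) of finite variance, the one-dimensional Brascamp–Lieb inequality holds: Var[φ(X)] ≤ ∫_I (1/V''(x)) (φ'(x))² f_∞(x) dx. -/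
open MeasureTheory Set


/-- Monotonicity from a nonnegative derivative on a convex open set. -/
lemma bl_mono {I : Set ℝ} (hIo : IsOpen I) (hIc : Convex ℝ I) {h h' : ℝ → ℝ}
    (hd : ∀ x ∈ I, HasDerivAt h (h' x) x) (hn : ∀ x ∈ I, 0 ≤ h' x) : MonotoneOn h I := by
  apply monotoneOn_of_deriv_nonneg hIc
  · intro x hx
    exact (hd x hx).continuousAt.continuousWithinAt
  · intro x hx
    rw [hIo.interior_eq] at hx
    exact (hd x hx).differentiableAt.differentiableWithinAt
  · intro x hx
    rw [hIo.interior_eq] at hx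
    rw [(hd x hx).deriv]
    exact hn x hx

/-- Local form on compact intervals containing the critical point `c`. -/
lemma bl_compact {I : Set ℝ} (hIo : IsOpen I) (hIc : Convex ℝ I)
    {W w g p f : ℝ → ℝ} {c : ℝ} (hc : c ∈ I) (hWc : W c = 0) (hgc : g c = 0)
    (hW : ∀ x ∈ I, HasDerivAt W (w x) x) (hw : ContinuousOn w I) (hwpos : ∀ x ∈ I, 0 < w x)
    (hg : ∀ x ∈ I, HasDerivAt g (p x) x) (hp : ContinuousOn p I)
    (hf : ∀ x ∈ I, HasDerivAt f (-W x * f x) x) (hfpos : ∀ x, 0 < f x)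
    {a b : ℝ} (ha : a ∈ I) (hb : b ∈ I) (hac : a ≤ c) (hcb : c ≤ b) :
    ∫ x in a..b, g x ^ 2 * f x ≤ ∫ x in a..b, (1 / w x) * p x ^ 2 * f x := by
  have hq : ContinuousOn (fun x => (1 / w x) * p x ^ 2) I := by
    apply ContinuousOn.mul _ (hp.pow 2)
    exact continuousOn_const.div hw (fun x hx => (hwpos x hx).ne')
  have hsub : ∀ {x y}, x ∈ I → y ∈ I → uIcc x y ⊆ I := fun hx hy =>
    hIc.ordConnected.uIcc_subset hx hy
  set G : ℝ → ℝ := fun x => ∫ t in c..x, (1 / w t) * p t ^ 2 with hGdef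
  have hGc : G c = 0 := by simp [hGdef]
  have hG : ∀ x ∈ I, HasDerivAt G ((1 / w x) * p x ^ 2) x := by
    intro x hx
    apply intervalIntegral.integral_hasDerivAt_right
    · exact (hq.mono (hsub hc hx)).intervalIntegrable
    · exact hq.stronglyMeasurableAtFilter hIo x hx
    · exact hq.continuousAt (hIo.mem_nhds hx)
  have hGm : MonotoneOn G I := bl_mono hIo hIc hG (fun x hx => by
    have := hwpos x hx
    positivity)
  have hWm : StrictMonoOn W I := by
    apply strictMonoOn_of_deriv_pos hIc
    · intro x hx
      exact (hW x hx).continuousAt.continuousWithinAt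
    · intro x hx
      rw [hIo.interior_eq] at hx
      rw [(hW x hx).deriv]
      exact hwpos x hx
  have key : ∀ x ∈ I, g x ^ 2 ≤ W x * G x := by
    intro x hx
    set l := g x / W x with hl
    have hm : MonotoneOn (fun t => l ^ 2 * W t - 2 * l * g t + G t) I := by
      apply bl_mono hIo hIc
        (h' := fun t => l ^ 2 * w t - 2 * l * p t + (1 / w t) * p t ^ 2)
      · intro t ht
        exact (((hW t ht).const_mul _).sub ((hg t ht).const_mul _)).add (hG t ht)
      · intro t ht
        have h0 := hwpos t ht
        have : l ^ 2 * w t - 2 * l * p t + (1 / w t) * p t ^ 2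
            = (1 / w t) * (l * w t - p t) ^ 2 := by
          field_simp
          ring
        rw [this]
        positivity
    have hEq : ∀ (_ : W x ≠ 0), W x * (l ^ 2 * W x - 2 * l * g x + G x)
        = W x * G x - g x ^ 2 := by
      intro h
      rw [hl]
      field_simp
      ring
    rcases lt_trichotomy x c with h | h | h
    · have hWx : W x < 0 := hWc ▸ hWm hx hc h
      have h1 := hm hx hc h.le
      simp only [hWc, hgc, hGc] at h1
      have h2 := hEq hWx.ne
      nlinarith
    · subst h
      simp [hgc, hGc]
    · have hWx : 0 < W x := hWc ▸ hWm hc hx h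
      have h1 := hm hc hx h.le
      simp only [hWc, hgc, hGc] at h1
      have h2 := hEq hWx.ne'
      nlinarith
  have cW : ContinuousOn W I := fun x hx => (hW x hx).continuousAt.continuousWithinAt
  have cg : ContinuousOn g I := fun x hx => (hg x hx).continuousAt.continuousWithinAt
  have cf : ContinuousOn f I := fun x hx => (hf x hx).continuousAt.continuousWithinAt
  have cG : ContinuousOn G I := fun x hx => (hG x hx).continuousAt.continuousWithinAt
  have hab := hac.trans hcb
  have i1 : IntervalIntegrable (fun x => g x ^ 2 * f x) volume a b :=
    (((cg.pow 2).mul cf).mono (hsub ha hb)).intervalIntegrable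
  have i2 : IntervalIntegrable (fun x => W x * G x * f x) volume a b :=
    (((cW.mul cG).mul cf).mono (hsub ha hb)).intervalIntegrable
  have i3 : IntervalIntegrable (fun x => (1 / w x) * p x ^ 2 * f x) volume a b :=
    ((hq.mul cf).mono (hsub ha hb)).intervalIntegrable
  have s1 : ∫ x in a..b, g x ^ 2 * f x ≤ ∫ x in a..b, W x * G x * f x := by
    apply intervalIntegral.integral_mono_on hab i1 i2
    intro x hx
    exact mul_le_mul_of_nonneg_right
      (key x (hsub ha hb (by rwa [uIcc_of_le hab]))) (hfpos x).le
  have s2 : ∫ x in a..b, ((1 / w x) * p x ^ 2 * f x - W x * G x * f x)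
      = G b * f b - G a * f a := by
    apply intervalIntegral.integral_eq_sub_of_hasDerivAt (f := fun x => G x * f x)
    · intro x hx
      have hx' := hsub ha hb hx
      refine ((hG x hx').mul (hf x hx')).congr_deriv ?_
      ring
    · exact i3.sub i2
  rw [intervalIntegral.integral_sub i3 i2] at s2
  have g1 : 0 ≤ G b := hGc ▸ hGm hc hb hcb
  have g2 : G a ≤ 0 := hGc ▸ hGm ha hc hac
  have := mul_nonneg g1 (hfpos b).le
  have := mul_nonneg (neg_nonneg.2 g2) (hfpos a).le
  linarith

/-- **One-dimensional Brascamp–Lieb inequality** (Remark after Theorem 2.1).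
Let `V` be a smooth strictly convex function (`V'' > 0`) on an open interval
`I = (ia, ib) ⊆ ℝ` (possibly with infinite endpoints), and suppose
`finf(x) = C exp(−V(x))` is a probability density on `I` for some `C > 0`.
Assume the boundary conditions `lim_{x→ia} V'(x) < 0` and `lim_{x→ib} V'(x) > 0`;
since `V'` is strictly increasing, these are equivalent to `V'` taking a negative
and a positive value on `I`. Then for every random variable `X` with density `finf`
and every smooth `φ` with `φ(X)` of finite variance,
`Var[φ(X)] ≤ ∫_I (1/V''(x)) (φ'(x))² finf(x) dx`
(whenever the right-hand side is finite). -/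
theorem brascamp_lieb_one_dimensional
    (ia ib : EReal) (hii : ia < ib)
    (I : Set ℝ) (hI : I = {x : ℝ | ia < (x : EReal) ∧ (x : EReal) < ib})
    (V φ : ℝ → ℝ) (C : ℝ) (hC : 0 < C)
    (hVsmooth : ContDiffOn ℝ (⊤ : ℕ∞) V I)
    (hVconvex : ∀ x ∈ I, 0 < deriv (deriv V) x)
    (hleft : ∃ x ∈ I, deriv V x < 0)
    (hright : ∃ x ∈ I, 0 < deriv V x)
    (hprob : ∫ x in I, C * Real.exp (-V x) = 1)
    (hφsmooth : ContDiffOn ℝ (⊤ : ℕ∞) φ I)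
    (hvar : IntegrableOn (fun x => φ x ^ 2 * (C * Real.exp (-V x))) I)
    (hrhs : IntegrableOn
      (fun x => (1 / deriv (deriv V) x) * (deriv φ x) ^ 2 * (C * Real.exp (-V x))) I) :
    (∫ x in I, φ x ^ 2 * (C * Real.exp (-V x)))
        - (∫ x in I, φ x * (C * Real.exp (-V x))) ^ 2
      ≤ ∫ x in I, (1 / deriv (deriv V) x) * (deriv φ x) ^ 2 * (C * Real.exp (-V x)) := by
  have hIo : IsOpen I := by
    rw [hI]
    exact (isOpen_lt continuous_const continuous_coe_real_ereal).inter
      (isOpen_lt continuous_coe_real_ereal continuous_const)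
  have hIord : OrdConnected I := by
    rw [hI]
    refine ⟨fun x hx y hy z hz => ⟨hx.1.trans_le ?_, lt_of_le_of_lt ?_ hy.2⟩⟩
    · exact_mod_cast hz.1
    · exact_mod_cast hz.2
  have hIc : Convex ℝ I := hIord.convex
  have hV1 : ContDiffOn ℝ (⊤ : ℕ∞) (deriv V) I :=
    hVsmooth.deriv_of_isOpen hIo (by simp)
  have hV2 : ContDiffOn ℝ (⊤ : ℕ∞) (deriv (deriv V)) I :=
    hV1.deriv_of_isOpen hIo (by simp)
  have hφ1 : ContDiffOn ℝ (⊤ : ℕ∞) (deriv φ) I :=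
    hφsmooth.deriv_of_isOpen hIo (by simp)
  have hda : ∀ {u : ℝ → ℝ}, ContDiffOn ℝ (⊤ : ℕ∞) u I → ∀ x ∈ I, HasDerivAt u (deriv u x) x := by
    intro u hu x hx
    exact ((hu.differentiableOn (by simp)).differentiableAt (hIo.mem_nhds hx)).hasDerivAt
  obtain ⟨c, hc, hWc⟩ : ∃ c ∈ I, deriv V c = 0 := by
    obtain ⟨x, hx, hx0⟩ := hleft
    obtain ⟨y, hy, hy0⟩ := hright
    have hs := hIc.isPreconnected.intermediate_value hx hy hV1.continuousOn
    obtain ⟨c, hc, h⟩ := hs ⟨hx0.le, hy0.le⟩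
    exact ⟨c, hc, h⟩
  set f : ℝ → ℝ := fun x => C * Real.exp (-V x) with hfdef
  have hfpos : ∀ x, 0 < f x := fun x => by positivity
  have hfd : ∀ x ∈ I, HasDerivAt f (-deriv V x * f x) x := by
    intro x hx
    refine (((hda hVsmooth x hx).fun_neg.exp).const_mul C).congr_deriv ?_
    rw [hfdef]
    ring
  have hIm : MeasurableSet I := hIo.measurableSet
  have if0 : IntegrableOn f I := by
    by_contra h
    have : ∫ x in I, f x = 0 := integral_undef h
    rw [hprob] at this
    exact one_ne_zero this
  have cf : ContinuousOn f I := fun x hx => (hfd x hx).continuousAt.continuousWithinAt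
  have if1 : IntegrableOn (fun x => φ x * f x) I := by
    refine Integrable.mono' (if0.add hvar)
      ((hφsmooth.continuousOn.mul cf).aestronglyMeasurable hIm) ?_
    refine Filter.Eventually.of_forall fun x => ?_
    have h1 := hfpos x
    rw [Real.norm_eq_abs, abs_mul, abs_of_pos h1]
    have h2 : |φ x| ≤ 1 + φ x ^ 2 := by
      rw [← sq_abs]
      nlinarith [sq_nonneg (|φ x| - 1), abs_nonneg (φ x)]
    calc |φ x| * f x ≤ (1 + φ x ^ 2) * f x := mul_le_mul_of_nonneg_right h2 h1.le
      _ = f x + φ x ^ 2 * f x := by ring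
  set k := φ c with hk
  have hexp : ∀ x, (φ x - k) ^ 2 * f x
      = φ x ^ 2 * f x - 2 * k * (φ x * f x) + k ^ 2 * f x := fun x => by ring
  have ig : IntegrableOn (fun x => (φ x - k) ^ 2 * f x) I := by
    simp only [hexp]
    exact (hvar.sub (if1.const_mul _)).add (if0.const_mul _)
  have eg : ∫ x in I, (φ x - k) ^ 2 * f x
      = (∫ x in I, φ x ^ 2 * f x) - 2 * k * (∫ x in I, φ x * f x) + k ^ 2 := by
    simp only [hexp]
    have j1 : IntegrableOn (fun x => 2 * k * (φ x * f x)) I := if1.const_mul _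
    have j2 : IntegrableOn (fun x => k ^ 2 * f x) I := if0.const_mul _
    have j0 : IntegrableOn (fun x => φ x ^ 2 * f x) I := hvar
    have j3 : IntegrableOn (fun x => φ x ^ 2 * f x - 2 * k * (φ x * f x)) I := j0.sub j1
    rw [integral_add j3 j2, integral_sub j0 j1, integral_const_mul, integral_const_mul, hprob, mul_one]
  have main : ∫ x in I, (φ x - k) ^ 2 * f x
      ≤ ∫ x in I, (1 / deriv (deriv V) x) * (deriv φ x) ^ 2 * f x := by
    have hc' := hc
    rw [hI] at hc'
    obtain ⟨u, hu, hu1, hu2⟩ := exists_seq_strictMono_tendsto' hc'.2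
    obtain ⟨v, hv, hv1, hv2⟩ := exists_seq_strictAnti_tendsto' hc'.1
    have hur : ∀ n, (((u n).toReal : ℝ) : EReal) = u n := fun n =>
      EReal.coe_toReal (ne_top_of_lt (hu1 n).2) (ne_bot_of_gt (hu1 n).1)
    have hvr : ∀ n, (((v n).toReal : ℝ) : EReal) = v n := fun n =>
      EReal.coe_toReal (ne_top_of_lt (hv1 n).2) (ne_bot_of_gt (hv1 n).1)
    have huI : ∀ n, (u n).toReal ∈ I := fun n => by
      rw [hI]
      refine ⟨?_, ?_⟩
      · rw [hur]; exact hc'.1.trans (hu1 n).1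
      · rw [hur]; exact (hu1 n).2
    have hvI : ∀ n, (v n).toReal ∈ I := fun n => by
      rw [hI]
      refine ⟨?_, ?_⟩
      · rw [hvr]; exact (hv1 n).1
      · rw [hvr]; exact (hv1 n).2.trans hc'.2
    have huc : ∀ n, c ≤ (u n).toReal := fun n => by
      rw [← EReal.coe_le_coe_iff, hur]; exact (hu1 n).1.le
    have hvc : ∀ n, (v n).toReal ≤ c := fun n => by
      rw [← EReal.coe_le_coe_iff, hvr]; exact (hv1 n).2.le
    let K : ℕ → Set ℝ := fun n => Ioc (v n).toReal (u n).toReal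
    have hKsub : ∀ n, K n ⊆ I := fun n x hx =>
      hIord.out (hvI n) (huI n) ⟨hx.1.le, hx.2⟩
    have hKmono : Monotone K := by
      intro m n hmn
      apply Ioc_subset_Ioc
      · rw [← EReal.coe_le_coe_iff, hvr, hvr]; exact hv.antitone hmn
      · rw [← EReal.coe_le_coe_iff, hur, hur]; exact hu.monotone hmn
    have hKU : ⋃ n, K n = I := by
      apply Subset.antisymm (iUnion_subset hKsub)
      intro x hx
      rw [hI] at hx
      obtain ⟨n, hn1, hn2⟩ := ((hu2.eventually (lt_mem_nhds hx.2)).and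
        (hv2.eventually (gt_mem_nhds hx.1))).exists
      refine mem_iUnion.2 ⟨n, ?_, ?_⟩
      · rw [← EReal.coe_lt_coe_iff, hvr]; exact hn2
      · rw [← EReal.coe_le_coe_iff, hur]; exact hn1.le
    have hlim := tendsto_setIntegral_of_monotone (μ := volume)
      (f := fun x => (φ x - k) ^ 2 * f x)
      (fun n => (measurableSet_Ioc : MeasurableSet (K n))) hKmono (by rw [hKU]; exact ig)
    rw [hKU] at hlim
    refine le_of_tendsto' hlim fun n => ?_
    have hcomp := bl_compact hIo hIc (W := deriv V) (w := deriv (deriv V))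
      (g := fun x => φ x - k) (p := deriv φ) (f := f) hc hWc (by simp [hk])
      (hda hV1) hV2.continuousOn hVconvex
      (fun x hx => (hda hφsmooth x hx).sub_const k) hφ1.continuousOn hfd hfpos
      (hvI n) (huI n) (hvc n) (huc n)
    rw [intervalIntegral.integral_of_le ((hvc n).trans (huc n)),
      intervalIntegral.integral_of_le ((hvc n).trans (huc n))] at hcomp
    refine hcomp.trans (setIntegral_mono_set hrhs ?_ (hKsub n).eventuallyLE)
    filter_upwards [ae_restrict_mem hIm] with x hx
    have h1 := hVconvex x hx
    have h2 := hfpos x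
    simp only [Pi.zero_apply]
    positivity
  rw [eg] at main
  nlinarith [sq_nonneg ((∫ x in I, φ x * f x) - k)]
end

section
/- Let β > 1/2 and let X be a random variable distributed on ℝ with the Cauchy-type density f_β(x) = C_β/(1+x²)^β, where C_β > 0 is the constant making f_β a probability density. Then for every smooth function φ on ℝ such that φ(X) has finite variance, Var[φ(X)] ≤ (1/ρ(β)) E[(1+X²) (φ'(X))²], where ρ(β) = (β − 1/2)² for 1/2 < β ≤ 3/2 and ρ(β) = 2(β − 1) for β > 3/2. -/
open MeasureTheory Set

lemma aux_alg (x w y d β t ρ : ℝ) (hx : x ≠ 0) (hw : 0 < w)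
    (hA : 0 ≤ 2 * β - 3 * t + 1 - ρ) (hB : 0 ≤ 2 * β * t - t - t ^ 2 - ρ) :
    (-2 * β * x * w / (1 + x ^ 2)) * ((1 + t * x ^ 2) / x) * y ^ 2
      + w * (t - 1 / x ^ 2) * y ^ 2 + w * ((1 + t * x ^ 2) / x) * (2 * y * d)
      ≤ (1 + x ^ 2) * d ^ 2 * w - ρ * (y ^ 2 * w) := by
  have h1 : 0 < 1 + x ^ 2 := by positivity
  have key : (1 + x ^ 2) * d ^ 2 * w - ρ * (y ^ 2 * w)
      - ((-2 * β * x * w / (1 + x ^ 2)) * ((1 + t * x ^ 2) / x) * y ^ 2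
      + w * (t - 1 / x ^ 2) * y ^ 2 + w * ((1 + t * x ^ 2) / x) * (2 * y * d))
      = w / (1 + x ^ 2) * (((1 + x ^ 2) * d - (1 + t * x ^ 2) / x * y) ^ 2
        + y ^ 2 * ((2 * β - 3 * t + 1 - ρ) + (2 * β * t - t - t ^ 2 - ρ) * x ^ 2)) := by
    field_simp
    ring
  have : 0 ≤ w / (1 + x ^ 2) * (((1 + x ^ 2) * d - (1 + t * x ^ 2) / x * y) ^ 2
        + y ^ 2 * ((2 * β - 3 * t + 1 - ρ) + (2 * β * t - t - t ^ 2 - ρ) * x ^ 2)) := by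
    positivity
  linarith

lemma aux_w (β x : ℝ) : HasDerivAt (fun x : ℝ => (1 + x ^ 2) ^ (-β))
    (-2 * β * x * (1 + x ^ 2) ^ (-β) / (1 + x ^ 2)) x := by
  have h1 : 0 < 1 + x ^ 2 := by positivity
  have h2 : HasDerivAt (fun x : ℝ => 1 + x ^ 2) (2 * x) x := by
    simpa using (hasDerivAt_pow 2 x).const_add 1
  have := h2.rpow_const (p := -β) (Or.inl h1.ne')
  convert this using 1
  rw [Real.rpow_sub h1, Real.rpow_one]
  ring

noncomputable def auxG (β t : ℝ) (φ : ℝ → ℝ) (x : ℝ) : ℝ :=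
  (1 + x ^ 2) ^ (-β) * (1 + t * x ^ 2) * (φ x - φ 0) * dslope φ 0 x

lemma auxG_ne (β t : ℝ) (φ : ℝ → ℝ) (x : ℝ) (hx : x ≠ 0) :
    auxG β t φ x = (1 + x ^ 2) ^ (-β) * ((1 + t * x ^ 2) / x) * (φ x - φ 0) ^ 2 := by
  rw [auxG, dslope_of_ne _ hx, slope_def_field]
  field_simp
  simp
  ring

lemma auxG_deriv (β t : ℝ) (φ : ℝ → ℝ) (hφ : Differentiable ℝ φ) (x : ℝ) (hx : x ≠ 0) :
    HasDerivAt (auxG β t φ)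
     ((-2 * β * x * (1 + x ^ 2) ^ (-β) / (1 + x ^ 2)) * ((1 + t * x ^ 2) / x) * (φ x - φ 0) ^ 2
      + (1 + x ^ 2) ^ (-β) * (t - 1 / x ^ 2) * (φ x - φ 0) ^ 2
      + (1 + x ^ 2) ^ (-β) * ((1 + t * x ^ 2) / x) * (2 * (φ x - φ 0) * deriv φ x)) x := by
  have h2 : HasDerivAt (fun x : ℝ => (1 + t * x ^ 2) / x) (t - 1 / x ^ 2) x := by
    have a : HasDerivAt (fun x : ℝ => 1 + t * x ^ 2) (t * (2 * x)) x := by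
      simpa using ((hasDerivAt_pow 2 x).const_mul t).const_add 1
    have b := a.div (hasDerivAt_id x) hx
    refine HasDerivAt.congr_deriv b ?_
    simp only [id]
    field_simp
    ring
  have h3 : HasDerivAt (fun x : ℝ => (φ x - φ 0) ^ 2) (2 * (φ x - φ 0) * deriv φ x) x := by
    have a := ((hφ x).hasDerivAt.sub_const (φ 0)).pow 2
    refine HasDerivAt.congr_deriv a ?_
    simp
  have h4 := ((aux_w β x).mul h2).mul h3
  have h5 : auxG β t φ =ᶠ[nhds x] fun x =>
      (1 + x ^ 2) ^ (-β) * ((1 + t * x ^ 2) / x) * (φ x - φ 0) ^ 2 := by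
    filter_upwards [isOpen_ne.mem_nhds hx] with z hz using auxG_ne β t φ z hz
  refine HasDerivAt.congr_of_eventuallyEq ?_ h5
  refine HasDerivAt.congr_deriv h4 ?_
  simp only [Pi.mul_apply]
  ring

lemma auxG_cont (β t : ℝ) (φ : ℝ → ℝ) (hφ : Differentiable ℝ φ) : Continuous (auxG β t φ) := by
  have h1 : Continuous (dslope φ 0) := by
    rw [continuous_iff_continuousAt]
    intro x
    by_cases hx : x = 0
    · subst hx
      exact continuousAt_dslope_same.2 (hφ 0)
    · exact (continuousAt_dslope_of_ne hx).2 (hφ x).continuousAt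
  have h2 : Continuous (fun x : ℝ => (1 + x ^ 2) ^ (-β)) :=
    continuous_iff_continuousAt.2 fun x => (aux_w β x).continuousAt
  have h3 := hφ.continuous
  unfold auxG
  fun_prop

lemma aux_half (β t ρ : ℝ) (φ : ℝ → ℝ) (hφ : Differentiable ℝ φ)
    (hA : 0 ≤ 2 * β - 3 * t + 1 - ρ) (hB : 0 ≤ 2 * β * t - t - t ^ 2 - ρ)
    (g : ℝ → ℝ) (hg : g = fun x => (1 + x ^ 2) * (deriv φ x) ^ 2 * (1 + x ^ 2) ^ (-β)
      - ρ * ((φ x - φ 0) ^ 2 * (1 + x ^ 2) ^ (-β)))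
    (hi : Integrable g) (a b : ℝ) (hab : a ≤ b) (h0 : (0 : ℝ) ∉ Ioo a b) :
    auxG β t φ b - auxG β t φ a ≤ ∫ x in a..b, g x := by
  refine intervalIntegral.sub_le_integral_of_hasDeriv_right_of_le hab
    (auxG_cont β t φ hφ).continuousOn
    (fun x hx => (auxG_deriv β t φ hφ x (fun h => h0 (h ▸ hx))).hasDerivWithinAt)
    hi.integrableOn ?_
  intro x hx
  rw [hg]
  exact aux_alg x _ _ _ β t ρ (fun h => h0 (h ▸ hx)) (by positivity) hA hB

lemma aux_main (β t ρ : ℝ) (φ : ℝ → ℝ) (hφ : Differentiable ℝ φ) (ht : 0 ≤ t)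
    (hA : 0 ≤ 2 * β - 3 * t + 1 - ρ) (hB : 0 ≤ 2 * β * t - t - t ^ 2 - ρ)
    (g : ℝ → ℝ) (hg : g = fun x => (1 + x ^ 2) * (deriv φ x) ^ 2 * (1 + x ^ 2) ^ (-β)
      - ρ * ((φ x - φ 0) ^ 2 * (1 + x ^ 2) ^ (-β)))
    (hi : Integrable g) : 0 ≤ ∫ x, g x := by
  have hT := intervalIntegral_tendsto_integral hi Filter.tendsto_neg_atTop_atBot
    (Filter.tendsto_id (α := ℝ) (x := Filter.atTop))
  refine ge_of_tendsto hT ?_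
  filter_upwards [Filter.eventually_gt_atTop (0 : ℝ)] with N hN
  have h1 := aux_half β t ρ φ hφ hA hB g hg hi 0 N hN.le (by simp)
  have h2 := aux_half β t ρ φ hφ hA hB g hg hi (-N) 0 (by linarith) (by simp)
  have h3 := intervalIntegral.integral_add_adjacent_intervals
    (hi.intervalIntegrable (a := -N) (b := 0)) (hi.intervalIntegrable (a := 0) (b := N))
  have h4 : 0 ≤ auxG β t φ N := by
    rw [auxG_ne _ _ _ _ hN.ne']; positivity
  have h5 : auxG β t φ (-N) ≤ 0 := by
    rw [auxG_ne _ _ _ _ (by linarith), div_neg]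
    have : 0 ≤ (1 + (-N) ^ 2) ^ (-β) * ((1 + t * (-N) ^ 2) / N) * (φ (-N) - φ 0) ^ 2 := by
      positivity
    linarith
  simp only [id]
  linarith

/-- **Chernoff inequality for Cauchy-type densities** (Theorem 2.2).
Let `β > 1/2` and let `X` be a random variable on `ℝ` with the Cauchy-type density
`f_β(x) = C_β/(1+x²)^β` (`C_β > 0` the normalizing constant). Then for every smooth
`φ` such that `φ(X)` has finite variance,
`Var[φ(X)] ≤ (1/ρ(β)) E[(1+X²)(φ'(X))²]`, where `ρ(β) = (β−1/2)²` for
`1/2 < β ≤ 3/2` and `ρ(β) = 2(β−1)` for `β > 3/2`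
(whenever the right-hand side is finite). -/
theorem chernoff_cauchy_type
    (β : ℝ) (hβ : 1 / 2 < β)
    (C : ℝ) (hC : 0 < C)
    (hnorm : ∫ x : ℝ, C / (1 + x ^ 2) ^ β = 1)
    (φ : ℝ → ℝ) (hφ : ContDiff ℝ (⊤ : ℕ∞) φ)
    (hvar : Integrable (fun x => φ x ^ 2 * (C / (1 + x ^ 2) ^ β)))
    (hrhs : Integrable (fun x => (1 + x ^ 2) * (deriv φ x) ^ 2 * (C / (1 + x ^ 2) ^ β))) :
    (∫ x : ℝ, φ x ^ 2 * (C / (1 + x ^ 2) ^ β))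
        - (∫ x : ℝ, φ x * (C / (1 + x ^ 2) ^ β)) ^ 2
      ≤ (1 / (if β ≤ 3 / 2 then (β - 1 / 2) ^ 2 else 2 * (β - 1))) *
          ∫ x : ℝ, (1 + x ^ 2) * (deriv φ x) ^ 2 * (C / (1 + x ^ 2) ^ β) := by
  obtain ⟨t, ρ, hρe, hρ, ht, hA, hB⟩ : ∃ t ρ : ℝ,
      ρ = (if β ≤ 3 / 2 then (β - 1 / 2) ^ 2 else 2 * (β - 1)) ∧ 0 < ρ ∧ 0 ≤ t ∧
      0 ≤ 2 * β - 3 * t + 1 - ρ ∧ 0 ≤ 2 * β * t - t - t ^ 2 - ρ := by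
    split_ifs with h
    · refine ⟨β - 1 / 2, _, rfl, ?_, ?_, ?_, ?_⟩
      · exact pow_pos (by linarith) 2
      · linarith
      · nlinarith
      · nlinarith
    · push Not at h
      refine ⟨1, _, rfl, ?_, ?_, ?_, ?_⟩ <;> linarith
  rw [← hρe]
  have hd : Differentiable ℝ φ := hφ.differentiable (by simp)
  have hf : ∀ x : ℝ, C / (1 + x ^ 2) ^ β = C * (1 + x ^ 2) ^ (-β) := fun x => by
    rw [Real.rpow_neg (by positivity)]; rfl
  have hfi : Integrable (fun x : ℝ => C / (1 + x ^ 2) ^ β) := by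
    by_contra h
    rw [integral_undef h] at hnorm
    exact zero_ne_one hnorm
  have hfp : ∀ x : ℝ, 0 < C / (1 + x ^ 2) ^ β := fun x => by positivity
  have hφf : Integrable (fun x : ℝ => φ x * (C / (1 + x ^ 2) ^ β)) := by
    refine (hvar.add hfi).mono'
      (hd.continuous.aestronglyMeasurable.mul hfi.aestronglyMeasurable) ?_
    filter_upwards with x
    rw [Real.norm_eq_abs, abs_mul, abs_of_pos (hfp x)]
    have h1 : |φ x| ≤ φ x ^ 2 + 1 := by
      rw [abs_le]; constructor <;> nlinarith [sq_nonneg (φ x - 1), sq_nonneg (φ x + 1)]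
    have := mul_le_mul_of_nonneg_right h1 (hfp x).le
    simp only [Pi.add_apply]
    linarith
  have hexp : (fun x : ℝ => (φ x - φ 0) ^ 2 * (C / (1 + x ^ 2) ^ β)) = fun x =>
      φ x ^ 2 * (C / (1 + x ^ 2) ^ β) - 2 * φ 0 * (φ x * (C / (1 + x ^ 2) ^ β))
        + φ 0 ^ 2 * (C / (1 + x ^ 2) ^ β) := by
    funext x; ring
  have i1 := hφf.const_mul (2 * φ 0)
  have i2 := hfi.const_mul (φ 0 ^ 2)
  have i12 : Integrable (fun x : ℝ => φ x ^ 2 * (C / (1 + x ^ 2) ^ β)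
      - 2 * φ 0 * (φ x * (C / (1 + x ^ 2) ^ β))) := hvar.sub i1
  have hψi : Integrable (fun x : ℝ => (φ x - φ 0) ^ 2 * (C / (1 + x ^ 2) ^ β)) := by
    rw [hexp]; exact (hvar.sub i1).add i2
  have hψ : ∫ x : ℝ, (φ x - φ 0) ^ 2 * (C / (1 + x ^ 2) ^ β) =
      (∫ x : ℝ, φ x ^ 2 * (C / (1 + x ^ 2) ^ β))
        - 2 * φ 0 * (∫ x : ℝ, φ x * (C / (1 + x ^ 2) ^ β)) + φ 0 ^ 2 := by
    rw [hexp, integral_add i12 i2, integral_sub hvar i1, integral_const_mul,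
      integral_const_mul, hnorm, mul_one]
  have hge : (fun x : ℝ => (1 + x ^ 2) * (deriv φ x) ^ 2 * (1 + x ^ 2) ^ (-β)
      - ρ * ((φ x - φ 0) ^ 2 * (1 + x ^ 2) ^ (-β))) = fun x =>
      C⁻¹ * ((1 + x ^ 2) * (deriv φ x) ^ 2 * (C / (1 + x ^ 2) ^ β)
        - ρ * ((φ x - φ 0) ^ 2 * (C / (1 + x ^ 2) ^ β))) := by
    funext x; rw [hf]; field_simp
  have i3 := hψi.const_mul ρ
  have hmain := aux_main β t ρ φ hd ht hA hB _ rfl (by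
    rw [hge]; exact (hrhs.sub i3).const_mul _)
  rw [hge, integral_const_mul, integral_sub hrhs i3, integral_const_mul] at hmain
  have h6 := (mul_nonneg_iff_of_pos_left (inv_pos.2 hC)).1 hmain
  rw [one_div, inv_mul_eq_div, le_div_iff₀ hρ]
  rw [hψ] at h6
  nlinarith [mul_nonneg hρ.le (sq_nonneg ((∫ x : ℝ, φ x * (C / (1 + x ^ 2) ^ β)) - φ 0))]
end

section
/- Let β > 1/2, m > 0, and let X be a random variable distributed on ℝ₊ = (0,∞) with the inverse Gamma density h_{β,m}(x) = C_{β,m} x^{−2β} e^{−m/x}, where C_{β,m} > 0 is the normalizing constant. Then for every smooth function φ on ℝ₊ such that φ(X) has finite variance, Var[φ(X)] ≤ (1/ρ(β)) E[X² (φ'(X))²], where ρ(β) = (β − 1/2)² for 1/2 < β ≤ 3/2 and ρ(β) = 2(β − 1) for β > 3/2. -/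
open MeasureTheory Set

namespace ChernoffIG

/-- the density -/
noncomputable def H (β m C : ℝ) (x : ℝ) : ℝ := C * x ^ (-(2 * β)) * Real.exp (-m / x)

lemma H_pos {β m C x : ℝ} (hC : 0 < C) (hx : 0 < x) : 0 < H β m C x := by
  unfold H
  have := Real.rpow_pos_of_pos hx (-(2 * β))
  positivity

lemma H_deriv {β m C x : ℝ} (hx : 0 < x) :
    HasDerivAt (H β m C) (H β m C x * (-(2 * β) / x + m / x ^ 2)) x := by
  unfold H
  have h1 : HasDerivAt (fun y : ℝ => y ^ (-(2 * β))) (-(2 * β) * x ^ (-(2 * β) - 1)) x :=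
    Real.hasDerivAt_rpow_const (Or.inl hx.ne')
  have h2 : HasDerivAt (fun y : ℝ => -m / y) (m / x ^ 2) x := by
    have := (hasDerivAt_inv hx.ne').const_mul (-m)
    refine (this.congr_deriv ?_).congr_of_eventuallyEq ?_
    · field_simp
    · exact Filter.Eventually.of_forall fun y => by simp [div_eq_mul_inv]
  refine ((h1.const_mul C).mul h2.exp).congr_deriv ?_
  rw [Real.rpow_sub_one hx.ne']
  field_simp

lemma key {H x p q s u v γ δ a : ℝ} (hH : 0 < H) (hx : 0 < x) (ha : 0 < a) (hγ : 0 < γ)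
    (hδ : 0 < δ) (hu : u = p - q) (hu0 : u ≠ 0)
    (hs : (p * a / x - q) / u ≤ 0) :
    γ * H * p * (δ * a / x - δ) * s ^ 2 / u + 2 * (γ * x * H * p) * s * v / u
      - γ * x * H * p * s ^ 2 * (γ * (p / x)) / u ^ 2
      ≤ x ^ 2 * v ^ 2 * H - γ * δ * (s ^ 2 * H) := by
  have e : x ^ 2 * v ^ 2 * H - γ * δ * (s ^ 2 * H) -
    (γ * H * p * (δ * a / x - δ) * s ^ 2 / u + 2 * (γ * x * H * p) * s * v / u
      - γ * x * H * p * s ^ 2 * (γ * (p / x)) / u ^ 2)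
     = H * (x * v - γ * p * s / u) ^ 2 + H * γ * δ * s ^ 2 * (- ((p * a / x - q) / u)) := by
    have : q = p - u := by rw [hu]; ring
    subst this
    field_simp
    ring
  have h1 : 0 ≤ H * (x * v - γ * p * s / u) ^ 2 := by positivity
  have h2 : 0 ≤ H * γ * δ * s ^ 2 * (- ((p * a / x - q) / u)) :=
    mul_nonneg (by positivity) (by linarith)
  linarith

lemma sgn {x a γ : ℝ} (hx : 0 < x) (ha : 0 < a) (hγ : 0 < γ) (hγ1 : γ ≤ 1) (hne : x ≠ a) :
    x ^ γ - a ^ γ ≠ 0 ∧ (x ^ γ * a / x - a ^ γ) / (x ^ γ - a ^ γ) ≤ 0 := by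
  have e : x ^ γ * a / x - a ^ γ = a * (x ^ (γ - 1) - a ^ (γ - 1)) := by
    rw [Real.rpow_sub_one hx.ne', Real.rpow_sub_one ha.ne']; field_simp
  rw [e]
  rcases lt_or_gt_of_ne hne with h | h
  · have h1 := Real.rpow_lt_rpow hx.le h hγ
    have h2 := Real.rpow_le_rpow_of_nonpos hx h.le (by linarith : γ - 1 ≤ 0)
    exact ⟨by linarith, div_nonpos_of_nonneg_of_nonpos
      (mul_nonneg ha.le (by linarith)) (by linarith)⟩
  · have h1 := Real.rpow_lt_rpow ha.le h hγ
    have h2 := Real.rpow_le_rpow_of_nonpos ha h.le (by linarith : γ - 1 ≤ 0)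
    exact ⟨by linarith, div_nonpos_of_nonpos_of_nonneg
      (mul_nonpos_of_nonneg_of_nonpos ha.le (by linarith)) (by linarith)⟩

noncomputable def G (β m C γ a : ℝ) (ψ : ℝ → ℝ) (x : ℝ) : ℝ :=
  γ * x * H β m C x * x ^ γ * ψ x ^ 2 / (x ^ γ - a ^ γ)

lemma K_deriv {β m C γ x : ℝ} (hx : 0 < x) :
    HasDerivAt (fun y => γ * y * H β m C y * y ^ γ)
      (γ * H β m C x * x ^ γ * (m / x - (2 * β - 1 - γ))) x := by
  have h1 : HasDerivAt (fun y : ℝ => y ^ γ) (γ * x ^ (γ - 1)) x :=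
    Real.hasDerivAt_rpow_const (Or.inl hx.ne')
  refine ((((hasDerivAt_id x).const_mul γ).mul (H_deriv hx)).mul h1).congr_deriv ?_
  rw [Real.rpow_sub_one hx.ne']
  simp only [Pi.mul_apply, id]
  field_simp
  ring

lemma G_deriv {β m C γ a : ℝ} {ψ : ℝ → ℝ} {x v : ℝ} (hx : 0 < x)
    (hu : x ^ γ - a ^ γ ≠ 0) (hψ : HasDerivAt ψ v x) :
    HasDerivAt (G β m C γ a ψ)
    (γ * H β m C x * x ^ γ * (m / x - (2 * β - 1 - γ)) * ψ x ^ 2 / (x ^ γ - a ^ γ)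
      + 2 * (γ * x * H β m C x * x ^ γ) * ψ x * v / (x ^ γ - a ^ γ)
      - γ * x * H β m C x * x ^ γ * ψ x ^ 2 * (γ * (x ^ γ / x)) / (x ^ γ - a ^ γ) ^ 2) x := by
  have h1 : HasDerivAt (fun y : ℝ => y ^ γ) (γ * x ^ (γ - 1)) x :=
    Real.hasDerivAt_rpow_const (Or.inl hx.ne')
  refine (((K_deriv (β := β) (m := m) (C := C) (γ := γ) hx).mul (hψ.pow 2)).div
    (h1.sub_const (a ^ γ)) hu).congr_deriv ?_
  rw [Real.rpow_sub_one hx.ne']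
  simp only [Pi.mul_apply, Pi.pow_apply]
  field_simp
  ring

lemma G_cont_a {β m C γ a : ℝ} {ψ : ℝ → ℝ} {v : ℝ} (ha : 0 < a) (hγ : 0 < γ)
    (hψ : HasDerivAt ψ v a) (h0 : ψ a = 0) : ContinuousAt (G β m C γ a ψ) a := by
  have h1 : HasDerivAt (fun y : ℝ => y ^ γ) (γ * a ^ (γ - 1)) a :=
    Real.hasDerivAt_rpow_const (Or.inl ha.ne')
  have hne : γ * a ^ (γ - 1) ≠ 0 := by
    have := Real.rpow_pos_of_pos ha (γ - 1); positivity
  have t1 := hasDerivAt_iff_tendsto_slope.1 h1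
  have t2 := hasDerivAt_iff_tendsto_slope.1 hψ
  have t3 := ((K_deriv (β := β) (m := m) (C := C) (γ := γ) ha).continuousAt.mul
    hψ.continuousAt).tendsto.mono_left (nhdsWithin_le_nhds (s := {a}ᶜ))
  rw [continuousAt_iff_punctured_nhds]
  have t := (t3.mul t2).div t1 hne
  have hG : G β m C γ a ψ a = 0 := by simp [G, h0]
  rw [hG]
  simp only [Pi.mul_apply, h0, mul_zero, zero_mul, zero_div] at t
  refine t.congr' ?_
  filter_upwards [self_mem_nhdsWithin] with y hy
  have hy : y - a ≠ 0 := sub_ne_zero.2 hy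
  simp only [G, slope_def_field, h0, sub_zero, Pi.mul_apply, Pi.div_apply]
  by_cases hz : y ^ γ - a ^ γ = 0
  · simp [hz]
  · field_simp

lemma hardy {β m C γ δ a : ℝ} {ψ : ℝ → ℝ} (hC : 0 < C) (ha : 0 < a) (hγ : 0 < γ) (hγ1 : γ ≤ 1)
    (hδ : 0 < δ) (hδe : δ = 2 * β - 1 - γ) (hm : m = δ * a)
    (hψ : ∀ x, 0 < x → HasDerivAt ψ (deriv ψ x) x) (h0 : ψ a = 0)
    (hi1 : IntegrableOn (fun x => ψ x ^ 2 * H β m C x) (Ioi 0))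
    (hi2 : IntegrableOn (fun x => x ^ 2 * (deriv ψ x) ^ 2 * H β m C x) (Ioi 0)) :
    γ * δ * ∫ x in Ioi (0:ℝ), ψ x ^ 2 * H β m C x
      ≤ ∫ x in Ioi (0:ℝ), x ^ 2 * (deriv ψ x) ^ 2 * H β m C x := by
  set D : ℝ → ℝ := fun x => x ^ 2 * (deriv ψ x) ^ 2 * H β m C x - γ * δ * (ψ x ^ 2 * H β m C x)
    with hD
  have hDi : IntegrableOn D (Ioi 0) := hi2.sub (hi1.const_mul _)
  have hcont : ∀ x, 0 < x → ContinuousAt (G β m C γ a ψ) x := by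
    intro x hx
    by_cases hxa : x = a
    · subst hxa; exact G_cont_a ha hγ (hψ x hx) h0
    · exact (G_deriv hx (sgn hx ha hγ hγ1 hxa).1 (hψ x hx)).continuousAt
  have hle : ∀ x y, 0 < x → x ≤ y → (∀ z ∈ Ioo x y, z ≠ a) →
      G β m C γ a ψ y - G β m C γ a ψ x ≤ ∫ z in x..y, D z := by
    intro x y hx hxy hz
    refine intervalIntegral.sub_le_integral_of_hasDeriv_right_of_le hxy
      (fun z hz => (hcont z (hx.trans_le hz.1)).continuousWithinAt)
      (fun z hz' => (G_deriv (hx.trans hz'.1)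
        (sgn (hx.trans hz'.1) ha hγ hγ1 (hz z hz')).1
        (hψ z (hx.trans hz'.1))).hasDerivWithinAt)
      (hDi.mono_set fun z hz => hx.trans_le hz.1) ?_
    intro z hz'
    have hz0 := hx.trans hz'.1
    have hs := sgn hz0 ha hγ hγ1 (hz z hz')
    rw [← hδe]
    have := key (s := ψ z) (v := deriv ψ z) (H_pos (β := β) (m := m) hC hz0) hz0 ha hγ hδ rfl hs.1 hs.2
    rw [← hm] at this
    exact this
  have hGa : G β m C γ a ψ a = 0 := by simp [G, h0]
  have hnum : ∀ x, 0 < x → 0 ≤ γ * x * H β m C x * x ^ γ * ψ x ^ 2 := by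
    intro x hx
    have := H_pos (β := β) (m := m) hC hx
    have := Real.rpow_pos_of_pos hx γ
    positivity
  have hR : 0 ≤ ∫ x in Ioi a, D x := by
    have t := intervalIntegral_tendsto_integral_Ioi a
      (hDi.mono_set (Ioi_subset_Ioi ha.le)) Filter.tendsto_id
    refine ge_of_tendsto t ?_
    filter_upwards [Filter.eventually_ge_atTop a] with y hy
    have := hle a y ha hy (fun z hz => hz.1.ne')
    rw [hGa, sub_zero] at this
    refine le_trans ?_ this
    exact div_nonneg (hnum y (ha.trans_le hy))
      (sub_nonneg.2 (Real.rpow_le_rpow ha.le hy hγ.le))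
  have hL : 0 ≤ ∫ x in Ioc 0 a, D x := by
    rw [← intervalIntegral.integral_of_le ha.le]
    have hDi' : IntegrableOn D (Icc 0 a) := by
      rw [integrableOn_Icc_iff_integrableOn_Ioc]
      exact hDi.mono_set fun z hz => hz.1
    have c := intervalIntegral.continuousOn_primitive_interval_left
      (a := 0) (b := a) (f := D) (μ := volume) (by rwa [uIcc_of_le ha.le])
    have t := (c 0 (by simp)).tendsto
    rw [uIcc_of_le ha.le] at t
    have t' := t.mono_left (nhdsWithin_mono 0 (Ioc_subset_Icc_self))
    have : (nhdsWithin (0:ℝ) (Ioc 0 a)).NeBot := by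
      rw [nhdsWithin_Ioc_eq_nhdsGT ha]; infer_instance
    refine ge_of_tendsto t' ?_
    filter_upwards [self_mem_nhdsWithin] with y hy
    have := hle y a hy.1 hy.2 (fun z hz => hz.2.ne)
    rw [hGa, zero_sub] at this
    refine le_trans ?_ this
    exact neg_nonneg.2 (div_nonpos_of_nonneg_of_nonpos (hnum y hy.1)
      (sub_nonpos.2 (Real.rpow_le_rpow hy.1.le hy.2 hγ.le)))
  have hT : 0 ≤ ∫ x in Ioi 0, D x := by
    rw [← Ioc_union_Ioi_eq_Ioi ha.le, setIntegral_union (Ioc_disjoint_Ioi le_rfl) measurableSet_Ioi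
      (hDi.mono_set fun z hz => hz.1) (hDi.mono_set (Ioi_subset_Ioi ha.le))]
    exact add_nonneg hL hR
  rw [hD, integral_sub hi2 (hi1.const_mul _), integral_const_mul] at hT
  linarith

lemma main {β m C γ δ : ℝ} {φ : ℝ → ℝ} (hC : 0 < C) (hm : 0 < m) (hγ : 0 < γ) (hγ1 : γ ≤ 1)
    (hδ : 0 < δ) (hδe : δ = 2 * β - 1 - γ)
    (hnorm : ∫ x in Ioi (0 : ℝ), H β m C x = 1)
    (hφ : ContDiffOn ℝ (⊤ : ℕ∞) φ (Ioi 0))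
    (hi1 : IntegrableOn (fun x => φ x ^ 2 * H β m C x) (Ioi 0))
    (hi2 : IntegrableOn (fun x => x ^ 2 * (deriv φ x) ^ 2 * H β m C x) (Ioi 0)) :
    (∫ x in Ioi (0:ℝ), φ x ^ 2 * H β m C x) - (∫ x in Ioi (0:ℝ), φ x * H β m C x) ^ 2
      ≤ 1 / (γ * δ) * ∫ x in Ioi (0:ℝ), x ^ 2 * (deriv φ x) ^ 2 * H β m C x := by
  have ha : 0 < m / δ := by positivity
  set a := m / δ with hadef
  set c := φ a with hc
  have hHi : IntegrableOn (H β m C) (Ioi 0) := by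
    by_contra h
    rw [integral_undef h] at hnorm
    exact zero_ne_one hnorm
  have hHc : ContinuousOn (H β m C) (Ioi 0) :=
    fun x hx => (H_deriv hx).continuousAt.continuousWithinAt
  have hφH : IntegrableOn (fun x => φ x * H β m C x) (Ioi 0) := by
    refine Integrable.mono' (hHi.add hi1)
      ((hφ.continuousOn.mul hHc).aestronglyMeasurable measurableSet_Ioi) ?_
    filter_upwards [ae_restrict_mem measurableSet_Ioi] with x hx
    have := H_pos (β := β) (m := m) hC hx
    rw [norm_mul, Real.norm_eq_abs, Real.norm_eq_abs, abs_of_pos this]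
    simp only [Pi.add_apply]
    have : |φ x| ≤ 1 + φ x ^ 2 := by
      rw [← sq_abs (φ x)]; nlinarith [sq_nonneg (|φ x| - 1), abs_nonneg (φ x)]
    nlinarith
  have hexp : (fun x => (φ x - c) ^ 2 * H β m C x)
      = fun x => (φ x ^ 2 * H β m C x - 2 * c * (φ x * H β m C x)) + c ^ 2 * H β m C x := by
    funext x; ring
  have hder : deriv (fun x => φ x - c) = deriv φ := by
    funext x; simp
  have hi3 : IntegrableOn (fun x => φ x ^ 2 * H β m C x - 2 * c * (φ x * H β m C x)) (Ioi 0) :=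
    hi1.sub (hφH.const_mul _)
  have h := hardy (β := β) (m := m) (C := C) (γ := γ) (δ := δ) (a := a) (ψ := fun x => φ x - c)
    hC ha hγ hγ1 hδ hδe (by rw [hadef]; field_simp) (by
      intro x hx
      have : DifferentiableAt ℝ φ x :=
        (hφ.differentiableOn (by simp)).differentiableAt (Ioi_mem_nhds hx)
      exact (this.sub_const c).hasDerivAt) (by simp [hc])
    (by rw [hexp]; exact hi3.add (hHi.const_mul _)) (by rw [hder]; exact hi2)
  rw [hder, hexp, integral_add hi3 (hHi.const_mul _), integral_sub hi1 (hφH.const_mul _),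
    integral_const_mul, integral_const_mul, hnorm] at h
  have hp : 0 < γ * δ := by positivity
  rw [one_div, inv_mul_eq_div, le_div_iff₀ hp]
  refine le_trans ?_ h
  rw [mul_comm]
  refine mul_le_mul_of_nonneg_left ?_ hp.le
  nlinarith [sq_nonneg ((∫ x in Ioi (0:ℝ), φ x * H β m C x) - c)]

end ChernoffIG

/-- **Chernoff inequality for inverse Gamma densities** (Theorem 2.3).
Let `β > 1/2`, `m > 0` and let `X` be a random variable on `ℝ₊ = (0,∞)` with the
inverse Gamma density `h_{β,m}(x) = C_{β,m} x^{−2β} e^{−m/x}` (`C_{β,m} > 0` the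
normalizing constant). Then for every smooth `φ` on `ℝ₊` such that `φ(X)` has
finite variance, `Var[φ(X)] ≤ (1/ρ(β)) E[X² (φ'(X))²]`, where `ρ(β) = (β−1/2)²`
for `1/2 < β ≤ 3/2` and `ρ(β) = 2(β−1)` for `β > 3/2`
(whenever the right-hand side is finite). -/
theorem chernoff_inverse_gamma
    (β m : ℝ) (hβ : 1 / 2 < β) (hm : 0 < m)
    (C : ℝ) (hC : 0 < C)
    (hnorm : ∫ x in Ioi (0 : ℝ), C * x ^ (-(2 * β)) * Real.exp (-m / x) = 1)
    (φ : ℝ → ℝ) (hφ : ContDiffOn ℝ (⊤ : ℕ∞) φ (Ioi 0))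
    (hvar : IntegrableOn
      (fun x => φ x ^ 2 * (C * x ^ (-(2 * β)) * Real.exp (-m / x))) (Ioi 0))
    (hrhs : IntegrableOn
      (fun x => x ^ 2 * (deriv φ x) ^ 2 * (C * x ^ (-(2 * β)) * Real.exp (-m / x))) (Ioi 0)) :
    (∫ x in Ioi (0 : ℝ), φ x ^ 2 * (C * x ^ (-(2 * β)) * Real.exp (-m / x)))
        - (∫ x in Ioi (0 : ℝ), φ x * (C * x ^ (-(2 * β)) * Real.exp (-m / x))) ^ 2
      ≤ (1 / (if β ≤ 3 / 2 then (β - 1 / 2) ^ 2 else 2 * (β - 1))) *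
          ∫ x in Ioi (0 : ℝ), x ^ 2 * (deriv φ x) ^ 2 *
            (C * x ^ (-(2 * β)) * Real.exp (-m / x)) := by
  split_ifs with h
  · have := ChernoffIG.main (β := β) (m := m) (C := C) (γ := β - 1 / 2) (δ := β - 1 / 2) hC hm
      (by linarith) (by linarith) (by linarith) (by ring) hnorm hφ hvar hrhs
    rw [← pow_two] at this
    exact this
  · have := ChernoffIG.main (β := β) (m := m) (C := C) (γ := 1) (δ := 2 * (β - 1)) hC hm
      (by linarith) (by linarith) (by linarith) (by ring) hnorm hφ hvar hrhs
    rw [one_mul] at this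
    exact this
end

section
/- Let κ > 0, m > 0, and let f_{κ,m}(x) = (m^κ/Γ(κ)) x^{−(1+κ)} e^{−m/x} for x ∈ ℝ₊ be the standard inverse Gamma density. Then for every smooth function φ on ℝ₊ such that ∫ φ² f_{κ,m} is finite, ∫_{ℝ₊} φ²(x) f_{κ,m}(x) dx − (∫_{ℝ₊} φ(x) f_{κ,m}(x) dx)² ≤ (1/γ(κ)) ∫_{ℝ₊} x² (φ'(x))² f_{κ,m}(x) dx, where γ(κ) = κ²/4 for 0 < κ ≤ 2 and γ(κ) = κ − 1 for κ > 2. Moreover, for κ > 2 the inequality becomes an equality when φ(x) is linear in x. -/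
open MeasureTheory Set

/-- The standard inverse Gamma density with shape `κ > 0` and scale `m > 0`:
`f_{κ,m}(x) = (m^κ/Γ(κ)) x^{−(1+κ)} e^{−m/x}`, `x ∈ ℝ₊`. -/
noncomputable def stdInvGamma (κ m x : ℝ) : ℝ :=
  m ^ κ / Real.Gamma κ * x ^ (-(1 + κ)) * Real.exp (-m / x)

lemma ig_int (s m : ℝ) (hs : 0 < s) (hm : 0 < m) :
    ∫ x in Ioi (0:ℝ), x ^ (-(1+s)) * Real.exp (-m/x) = (1/m)^s * Real.Gamma s := by
  rw [← Real.integral_rpow_mul_exp_neg_mul_Ioi hs hm,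
    ← integral_comp_rpow_Ioi _ (show (-1:ℝ) ≠ 0 by norm_num)]
  refine setIntegral_congr_fun measurableSet_Ioi fun x hx => ?_
  have hx : 0 < x := hx
  simp only [smul_eq_mul]
  rw [← Real.rpow_mul hx.le, abs_neg, abs_one, one_mul, ← mul_assoc, ← Real.rpow_add hx,
    Real.rpow_neg_one]
  rw [show -1 - 1 + -1 * -(1 + s) = s - 1 by ring, div_inv_eq_mul, neg_mul]

lemma ig_intble (s m : ℝ) (hs : 0 < s) (hm : 0 < m) :
    IntegrableOn (fun x : ℝ => x ^ (-(1+s)) * Real.exp (-m/x)) (Ioi 0) := by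
  by_contra h
  have := integral_undef h
  rw [ig_int s m hs hm] at this
  have h2 := Real.Gamma_pos_of_pos hs
  have : 0 < (1/m)^s * Real.Gamma s := by positivity
  linarith

lemma ig_mom_eq (κ m : ℝ) (n : ℕ) : EqOn (fun x : ℝ => x ^ n * stdInvGamma κ m x)
    (fun x => (m ^ κ / Real.Gamma κ) * (x ^ (-(1+(κ - n))) * Real.exp (-m/x))) (Ioi 0) := by
  intro x hx
  have hx : 0 < x := hx
  have : x ^ (-(1+(κ - n))) = x ^ n * x ^ (-(1 + κ)) := by
    rw [← Real.rpow_natCast, ← Real.rpow_add hx]; congr 1; ring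
  simp only [stdInvGamma]
  rw [this]; ring

lemma ig_mom_intble (κ m : ℝ) (n : ℕ) (hn : n < κ) (hm : 0 < m) :
    IntegrableOn (fun x : ℝ => x ^ n * stdInvGamma κ m x) (Ioi 0) :=
  IntegrableOn.congr_fun ((ig_intble (κ - n) m (by linarith) hm).const_mul _)
    (ig_mom_eq κ m n).symm measurableSet_Ioi

lemma ig_mom (κ m : ℝ) (n : ℕ) (hn : n < κ) (hm : 0 < m) :
    ∫ x in Ioi (0:ℝ), x ^ n * stdInvGamma κ m x = m ^ n * Real.Gamma (κ - n) / Real.Gamma κ := by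
  rw [setIntegral_congr_fun measurableSet_Ioi (ig_mom_eq κ m n), integral_const_mul,
    ig_int (κ - n) m (by linarith) hm, one_div, Real.inv_rpow hm.le, ← Real.rpow_neg hm.le]
  have : m ^ n = m ^ κ * m ^ (-(κ - n)) := by
    rw [← Real.rpow_natCast, ← Real.rpow_add hm]; congr 1; ring
  rw [this]; ring

lemma ig_int_one (κ m : ℝ) (hκ : 0 < κ) (hm : 0 < m) :
    IntegrableOn (stdInvGamma κ m) (Ioi 0) ∧ ∫ x in Ioi (0:ℝ), stdInvGamma κ m x = 1 := by
  have h1 := ig_mom_intble κ m 0 (by simpa using hκ) hm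
  have h2 := ig_mom κ m 0 (by simpa using hκ) hm
  have := (Real.Gamma_pos_of_pos hκ).ne'
  simp only [pow_zero, one_mul, Nat.cast_zero, sub_zero, div_self this] at h1 h2
  exact ⟨h1, h2⟩

lemma ig_pos (κ m : ℝ) (hκ : 0 < κ) (hm : 0 < m) (x : ℝ) (hx : 0 < x) :
    0 < stdInvGamma κ m x := by
  have := Real.Gamma_pos_of_pos hκ
  unfold stdInvGamma
  positivity

lemma nonneg_of_Ioi (D : ℝ → ℝ) (x0 : ℝ) (hx0 : 0 < x0) (hD : IntegrableOn D (Ioi 0))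
    (h : ∀ s, 0 < s → s < x0 → ∀ T, x0 < T → 0 ≤ ∫ x in s..T, D x) :
    0 ≤ ∫ x in Ioi (0:ℝ), D x := by
  have h1 : ∀ s, 0 < s → s < x0 → 0 ≤ ∫ x in Ioi s, D x := by
    intro s hs hs'
    have := intervalIntegral_tendsto_integral_Ioi (f := D) (μ := volume) s
      (hD.mono_set (Ioi_subset_Ioi hs.le)) (Filter.tendsto_id (α := ℝ) (x := Filter.atTop))
    refine ge_of_tendsto this ?_
    filter_upwards [Filter.eventually_gt_atTop x0] with T hT
    exact h s hs hs' T hT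
  have hc : AECover (volume.restrict (Ioi (0:ℝ))) (nhdsWithin (0:ℝ) (Ioi 0)) fun i => Ioi i :=
    aecover_Ioi_of_Ioi (a := fun i => i) (Filter.tendsto_id.mono_left nhdsWithin_le_nhds)
  have := hc.integral_tendsto_of_countably_generated hD
  refine ge_of_tendsto this ?_
  filter_upwards [Ioo_mem_nhdsGT hx0] with s hs
  rw [Measure.restrict_restrict measurableSet_Ioi,
    inter_eq_left.2 (Ioi_subset_Ioi hs.1.le)]
  exact h1 s hs.1 hs.2

lemma deriv_bound (f x γ h r u p q : ℝ) (hf : 0 < f) (hh : h ≠ 0) (hr : 0 ≤ r * h) :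
    (((f * (-γ * h - r)) * p ^ 2 + (x ^ 2 * f * u) * (2 * p * q)) * h
      - (x ^ 2 * f * u) * p ^ 2 * u) / h ^ 2 ≤ x ^ 2 * q ^ 2 * f - γ * (p ^ 2 * f) := by
  have : x ^ 2 * q ^ 2 * f - γ * (p ^ 2 * f) - (((f * (-γ * h - r)) * p ^ 2 +
      (x ^ 2 * f * u) * (2 * p * q)) * h - (x ^ 2 * f * u) * p ^ 2 * u) / h ^ 2
      = f * (x ^ 2 * (q - u * p / h) ^ 2 + (r * h) * (p / h) ^ 2) := by
    field_simp
    ring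
  have h2 : 0 ≤ f * (x ^ 2 * (q - u * p / h) ^ 2 + (r * h) * (p / h) ^ 2) := by positivity
  linarith

lemma key (κ m a : ℝ) (hκ : 0 < κ) (hm : 0 < m) (ha : 0 < a) (ha1 : a ≤ 1) (haκ : a < κ)
    (φ : ℝ → ℝ) (hφ : ContDiffOn ℝ (⊤ : ℕ∞) φ (Ioi 0)) (x0 : ℝ) (hx0 : x0 = m / (κ - a))
    (hD : IntegrableOn (fun x => x ^ 2 * (deriv φ x) ^ 2 * stdInvGamma κ m x
      - (a * (κ - a)) * ((φ x - φ x0) ^ 2 * stdInvGamma κ m x)) (Ioi 0)) :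
    0 ≤ ∫ x in Ioi (0:ℝ), (x ^ 2 * (deriv φ x) ^ 2 * stdInvGamma κ m x
      - (a * (κ - a)) * ((φ x - φ x0) ^ 2 * stdInvGamma κ m x)) := by
  have hκa : 0 < κ - a := by linarith
  have hx0p : 0 < x0 := by rw [hx0]; positivity
  have hm0 : x0 * (κ - a) = m := by rw [hx0]; field_simp
  have hdφ : ∀ x, 0 < x → HasDerivAt φ (deriv φ x) x := by
    intro x hx
    exact ((hφ.differentiableOn (by simp)).differentiableAt (Ioi_mem_nhds hx)).hasDerivAt
  set C : ℝ := m ^ κ / Real.Gamma κ with hC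
  set P : ℝ → ℝ := fun x => a * C * x ^ (a - κ) * Real.exp (-m / x) with hP
  set h : ℝ → ℝ := fun x => x ^ a - x0 ^ a with hh
  set r : ℝ → ℝ := fun x => m * a * (x0 ^ (a-1) - x ^ (a - 1)) with hr
  set G : ℝ → ℝ := fun x => P x * (φ x - φ x0) ^ 2 / h x with hG
  have hdh : ∀ x, 0 < x → HasDerivAt h (a * x ^ (a - 1)) x := by
    intro x hx
    have := (Real.hasDerivAt_rpow_const (x := x) (p := a) (Or.inl hx.ne')).sub_const (x0 ^ a)
    exact this
  have hPe : ∀ x, 0 < x → P x = x ^ 2 * stdInvGamma κ m x * (a * x ^ (a - 1)) := by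
    intro x hx
    have : x ^ (a - κ) = x ^ 2 * x ^ (-(1+κ)) * x ^ (a - 1) := by
      rw [← Real.rpow_natCast, ← Real.rpow_add hx, ← Real.rpow_add hx]; congr 1; push_cast; ring
    simp only [hP, stdInvGamma, this]; ring
  have hdP : ∀ x, 0 < x → HasDerivAt P
      (stdInvGamma κ m x * (-(a * (κ - a)) * h x - r x)) x := by
    intro x hx
    have h1 := (Real.hasDerivAt_rpow_const (x := x) (p := a - κ) (Or.inl hx.ne')).const_mul (a * C)
    have h2 : HasDerivAt (fun x : ℝ => Real.exp (-m / x)) (Real.exp (-m / x) * (m / x ^ 2)) x := by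
      have := ((hasDerivAt_inv hx.ne').const_mul (-m)).exp
      have e : (fun x : ℝ => Real.exp (-m / x)) = fun x : ℝ => Real.exp (-m * x⁻¹) := by
        funext y; rw [div_eq_mul_inv]
      rw [e]
      refine this.congr_deriv ?_
      rw [div_eq_mul_inv (-m) x]
      ring
    refine HasDerivAt.congr_deriv (h1.mul h2) ?_
    have e1 : x ^ (a - κ - 1) = x ^ (-(1+κ)) * x ^ a := by
      rw [← Real.rpow_add hx]; congr 1; ring
    have e2 : x ^ (a - κ) = x * (x ^ (-(1+κ)) * x ^ a) := by
      rw [← e1, Real.rpow_sub_one hx.ne']; field_simp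
    have e3 : x ^ (a - 1) = x ^ a / x := Real.rpow_sub_one hx.ne' a
    have e4 : x0 ^ (a - 1) = x0 ^ a / x0 := Real.rpow_sub_one hx0p.ne' a
    simp only [hh, hr, stdInvGamma, ← hC]
    rw [e1, e2, e3, e4]
    rw [← hm0]
    field_simp
    ring
  have hmono : ∀ x, 0 < x → x < x0 → h x < 0 := by
    intro x hx hxx
    have := Real.rpow_lt_rpow hx.le hxx ha
    simp only [hh]; linarith
  have hmono' : ∀ x, x0 < x → 0 < h x := by
    intro x hxx
    have := Real.rpow_lt_rpow hx0p.le hxx ha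
    simp only [hh]; linarith
  have hrh : ∀ x, 0 < x → 0 ≤ r x * h x := by
    intro x hx
    rcases lt_trichotomy x x0 with hl | rfl | hl
    · have := Real.rpow_le_rpow_of_nonpos hx hl.le (show a - 1 ≤ 0 by linarith)
      exact mul_nonneg_of_nonpos_of_nonpos
        (mul_nonpos_of_nonneg_of_nonpos (by positivity) (by linarith)) (hmono x hx hl).le
    · simp [hh]
    · have := Real.rpow_le_rpow_of_nonpos hx0p hl.le (show a - 1 ≤ 0 by linarith)
      exact mul_nonneg (mul_nonneg (by positivity) (by linarith)) (hmono' x hl).le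
  have hdG : ∀ x, 0 < x → h x ≠ 0 → HasDerivAt G
      ((((stdInvGamma κ m x * (-(a * (κ - a)) * h x - r x)) * (φ x - φ x0) ^ 2
       + (x ^ 2 * stdInvGamma κ m x * (a * x ^ (a - 1))) * (2 * (φ x - φ x0) * deriv φ x)) * h x
      - (x ^ 2 * stdInvGamma κ m x * (a * x ^ (a - 1))) * (φ x - φ x0) ^ 2 * (a * x ^ (a - 1)))
        / h x ^ 2) x := by
    intro x hx hhx
    have := ((hdP x hx).mul (((hdφ x hx).sub_const (φ x0)).pow 2)).div (hdh x hx) hhx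
    rw [← hPe x hx]
    refine HasDerivAt.congr_deriv this ?_
    simp
  have hcG : ∀ x, 0 < x → ContinuousAt G x := by
    intro x hx
    by_cases hxx : x = x0
    · subst hxx
      rw [continuousAt_iff_punctured_nhds]
      have hG0 : G x = 0 := by simp [hG]
      rw [hG0]
      have s1 := hasDerivAt_iff_tendsto_slope.1 (hdφ x hx)
      have s2 := hasDerivAt_iff_tendsto_slope.1 (hdh x hx)
      have s3 := s1.div s2 (by positivity)
      have c1 : Filter.Tendsto P (nhdsWithin x {x}ᶜ) (nhds (P x)) :=
        (hdP x hx).continuousAt.tendsto.mono_left nhdsWithin_le_nhds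
      have c2 : Filter.Tendsto (fun y => φ y - φ x) (nhdsWithin x {x}ᶜ) (nhds (φ x - φ x)) :=
        ((hdφ x hx).sub_const (φ x)).continuousAt.tendsto.mono_left nhdsWithin_le_nhds
      have s4 := (c1.mul c2).mul s3
      rw [sub_self, mul_zero, zero_mul] at s4
      refine s4.congr' ?_
      filter_upwards [self_mem_nhdsWithin] with y hy
      have hy : y - x ≠ 0 := sub_ne_zero.2 hy
      have hx0' : h x = 0 := by simp [hh]
      simp only [hG, slope_def_field, Pi.div_apply, hx0', sub_zero]
      rw [div_div_div_cancel_right₀ hy]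
      ring
    · refine (hdG x hx ?_).continuousAt
      rcases lt_or_gt_of_ne hxx with hl | hl
      · exact (hmono x hx hl).ne
      · exact (hmono' x hl).ne'
  have hG0 : G x0 = 0 := by simp [hG]
  have hPpos : ∀ x, 0 < x → 0 < P x := by
    intro x hx
    rw [hPe x hx]
    have := ig_pos κ m hκ hm x hx
    positivity
  have main : ∀ s T, 0 < s → s ≤ T → (∀ x ∈ Ioo s T, h x ≠ 0) → G T - G s ≤
      ∫ x in s..T, (x ^ 2 * (deriv φ x) ^ 2 * stdInvGamma κ m x
      - (a * (κ - a)) * ((φ x - φ x0) ^ 2 * stdInvGamma κ m x)) := by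
    intro s T hs hsT hne
    refine intervalIntegral.sub_le_integral_of_hasDeriv_right_of_le hsT
      (fun x hx => (hcG x (hs.trans_le hx.1)).continuousWithinAt)
      (fun x hx => (hdG x (hs.trans hx.1) (hne x hx)).hasDerivWithinAt)
      (hD.mono_set fun x hx => hs.trans_le hx.1) ?_
    intro x hx
    have hxp := hs.trans hx.1
    exact deriv_bound _ _ _ _ _ _ _ _ (ig_pos κ m hκ hm x hxp) (hne x hx) (hrh x hxp)
  refine nonneg_of_Ioi _ x0 hx0p hD ?_
  intro s hs hsx T hT
  have m1 := main s x0 hs hsx.le fun x hx => (hmono x (hs.trans hx.1) hx.2).ne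
  have m2 := main x0 T hx0p hT.le fun x hx => (hmono' x hx.1).ne'
  have g1 : G s ≤ 0 := div_nonpos_of_nonneg_of_nonpos
    (mul_nonneg (hPpos s hs).le (sq_nonneg _)) (hmono s hs hsx).le
  have g2 : 0 ≤ G T := div_nonneg
    (mul_nonneg (hPpos T (hx0p.trans hT)).le (sq_nonneg _)) (hmono' T hT).le
  have i1 : ∀ s T, 0 < s → s ≤ T → IntervalIntegrable (fun x => x ^ 2 * (deriv φ x) ^ 2 *
      stdInvGamma κ m x - (a * (κ - a)) * ((φ x - φ x0) ^ 2 * stdInvGamma κ m x)) volume s T := by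
    intro s T hs hsT
    rw [intervalIntegrable_iff_integrableOn_Ioc_of_le hsT]
    exact hD.mono_set fun x hx => hs.trans hx.1
  rw [← intervalIntegral.integral_add_adjacent_intervals (i1 s x0 hs hsx.le) (i1 x0 T hx0p hT.le)]
  linarith

lemma chern (κ m a : ℝ) (hκ : 0 < κ) (hm : 0 < m) (ha : 0 < a) (ha1 : a ≤ 1) (haκ : a < κ)
    (φ : ℝ → ℝ) (hφ : ContDiffOn ℝ (⊤ : ℕ∞) φ (Ioi 0))
    (i2 : IntegrableOn (fun x => φ x ^ 2 * stdInvGamma κ m x) (Ioi 0))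
    (i3 : IntegrableOn (fun x => x ^ 2 * (deriv φ x) ^ 2 * stdInvGamma κ m x) (Ioi 0)) :
      (∫ x in Ioi (0 : ℝ), φ x ^ 2 * stdInvGamma κ m x)
          - (∫ x in Ioi (0 : ℝ), φ x * stdInvGamma κ m x) ^ 2
        ≤ (1 / (a * (κ - a))) *
            ∫ x in Ioi (0 : ℝ), x ^ 2 * (deriv φ x) ^ 2 * stdInvGamma κ m x := by
  obtain ⟨i0, e0⟩ := ig_int_one κ m hκ hm
  have i1 : IntegrableOn (fun x => φ x * stdInvGamma κ m x) (Ioi 0) := by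
    refine Integrable.mono' (i2.add i0) ?_ ?_
    · exact (hφ.continuousOn.aestronglyMeasurable measurableSet_Ioi).mul i0.aestronglyMeasurable
    · filter_upwards [ae_restrict_mem measurableSet_Ioi] with x hx
      have := ig_pos κ m hκ hm x hx
      simp only [Pi.add_apply, Real.norm_eq_abs, abs_mul, abs_of_pos this]
      have h3 : |φ x| ≤ φ x ^ 2 + 1 := by
        rw [← sq_abs]; nlinarith [sq_nonneg (|φ x| - 1), abs_nonneg (φ x)]
      nlinarith
  set x0 := m / (κ - a) with hx0
  have he : (fun x => (φ x - φ x0) ^ 2 * stdInvGamma κ m x) = fun x =>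
      φ x ^ 2 * stdInvGamma κ m x - 2 * φ x0 * (φ x * stdInvGamma κ m x)
        + φ x0 ^ 2 * stdInvGamma κ m x := by
    funext x; ring
  have i4 : IntegrableOn (fun x => (φ x - φ x0) ^ 2 * stdInvGamma κ m x) (Ioi 0) := by
    rw [he]
    exact (i2.sub (i1.const_mul _)).add (i0.const_mul _)
  have e4 : ∫ x in Ioi (0:ℝ), (φ x - φ x0) ^ 2 * stdInvGamma κ m x =
      (∫ x in Ioi (0 : ℝ), φ x ^ 2 * stdInvGamma κ m x)
      - 2 * φ x0 * (∫ x in Ioi (0 : ℝ), φ x * stdInvGamma κ m x) + φ x0 ^ 2 := by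
    have j : IntegrableOn (fun x => φ x ^ 2 * stdInvGamma κ m x
        - 2 * φ x0 * (φ x * stdInvGamma κ m x)) (Ioi 0) := i2.sub (i1.const_mul _)
    rw [he, integral_add j (i0.const_mul _),
      integral_sub i2 (i1.const_mul _), integral_const_mul, integral_const_mul, e0, mul_one]
  have k := key κ m a hκ hm ha ha1 haκ φ hφ x0 hx0 (i3.sub (i4.const_mul _))
  rw [integral_sub i3 (i4.const_mul _), integral_const_mul, e4] at k
  have hγ : 0 < a * (κ - a) := mul_pos ha (by linarith)
  rw [one_div, ← div_eq_inv_mul, le_div_iff₀ hγ]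
  nlinarith [mul_nonneg hγ.le
    (sq_nonneg ((∫ x in Ioi (0 : ℝ), φ x * stdInvGamma κ m x) - φ x0))]

/-- **Chernoff inequality for the standard inverse Gamma density** (inequality (2.24)).
For `κ > 0`, `m > 0` and every smooth `φ` on `ℝ₊` with `∫ φ² f_{κ,m}` finite (and
finite right-hand side),
`∫ φ² f_{κ,m} − (∫ φ f_{κ,m})² ≤ (1/γ(κ)) ∫ x² (φ')² f_{κ,m}`, where
`γ(κ) = κ²/4` for `0 < κ ≤ 2` and `γ(κ) = κ−1` for `κ > 2`. Moreover, for `κ > 2`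
the inequality is an equality when `φ(x) = c x + d` is linear in `x`. -/
theorem chernoff_std_inverse_gamma
    (κ m : ℝ) (hκ : 0 < κ) (hm : 0 < m) :
    (∀ φ : ℝ → ℝ, ContDiffOn ℝ (⊤ : ℕ∞) φ (Ioi 0) →
      IntegrableOn (fun x => φ x ^ 2 * stdInvGamma κ m x) (Ioi 0) →
      IntegrableOn (fun x => x ^ 2 * (deriv φ x) ^ 2 * stdInvGamma κ m x) (Ioi 0) →
      (∫ x in Ioi (0 : ℝ), φ x ^ 2 * stdInvGamma κ m x)
          - (∫ x in Ioi (0 : ℝ), φ x * stdInvGamma κ m x) ^ 2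
        ≤ (1 / (if κ ≤ 2 then κ ^ 2 / 4 else κ - 1)) *
            ∫ x in Ioi (0 : ℝ), x ^ 2 * (deriv φ x) ^ 2 * stdInvGamma κ m x) ∧
    (2 < κ → ∀ c d : ℝ,
      (∫ x in Ioi (0 : ℝ), (c * x + d) ^ 2 * stdInvGamma κ m x)
          - (∫ x in Ioi (0 : ℝ), (c * x + d) * stdInvGamma κ m x) ^ 2
        = (1 / (κ - 1)) * ∫ x in Ioi (0 : ℝ), x ^ 2 * c ^ 2 * stdInvGamma κ m x) := by
  refine ⟨fun φ hφ i2 i3 => ?_, fun h2 c d => ?_⟩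
  · split_ifs with h
    · have := chern κ m (κ / 2) hκ hm (by linarith) (by linarith) (by linarith) φ hφ i2 i3
      rwa [show κ / 2 * (κ - κ / 2) = κ ^ 2 / 4 by ring] at this
    · have := chern κ m 1 hκ hm one_pos le_rfl (by linarith) φ hφ i2 i3
      rwa [one_mul] at this
  · obtain ⟨i0, e0⟩ := ig_int_one κ m hκ hm
    have i1 := ig_mom_intble κ m 1 (by push_cast; linarith) hm
    have i2 := ig_mom_intble κ m 2 (by push_cast; linarith) hm
    have e1 := ig_mom κ m 1 (by push_cast; linarith) hm
    have e2 := ig_mom κ m 2 (by push_cast; linarith) hm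
    simp only [pow_one] at i1 e1
    have g1 : Real.Gamma κ = (κ - 1) * ((κ - 2) * Real.Gamma (κ - 2)) := by
      rw [← Real.Gamma_add_one (by linarith), show κ - 2 + 1 = κ - 1 by ring,
        ← Real.Gamma_add_one (by linarith), sub_add_cancel]
    have g2 : Real.Gamma (κ - 1) = (κ - 2) * Real.Gamma (κ - 2) := by
      rw [← Real.Gamma_add_one (by linarith), show κ - 2 + 1 = κ - 1 by ring]
    have gp : 0 < Real.Gamma (κ - 2) := Real.Gamma_pos_of_pos (by linarith)
    push_cast at e1 e2
    rw [g1, g2] at e1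
    rw [g1] at e2
    have f1 : (fun x => (c * x + d) ^ 2 * stdInvGamma κ m x) = fun x =>
        c ^ 2 * (x ^ 2 * stdInvGamma κ m x) + 2 * c * d * (x * stdInvGamma κ m x)
          + d ^ 2 * stdInvGamma κ m x := by
      funext x; ring
    have f2 : (fun x => (c * x + d) * stdInvGamma κ m x) = fun x =>
        c * (x * stdInvGamma κ m x) + d * stdInvGamma κ m x := by
      funext x; ring
    have f3 : (fun x => x ^ 2 * c ^ 2 * stdInvGamma κ m x) = fun x =>
        c ^ 2 * (x ^ 2 * stdInvGamma κ m x) := by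
      funext x; ring
    have j : IntegrableOn (fun x => c ^ 2 * (x ^ 2 * stdInvGamma κ m x)
        + 2 * c * d * (x * stdInvGamma κ m x)) (Ioi 0) := (i2.const_mul _).add (i1.const_mul _)
    rw [f1, f2, f3, integral_add j (i0.const_mul _),
      integral_add (i2.const_mul _) (i1.const_mul _),
      integral_add (i1.const_mul _) (i0.const_mul _)]
    simp only [integral_const_mul, e0, e1, e2]
    have p1 : κ - 1 ≠ 0 := by linarith
    have p2 : κ - 2 ≠ 0 := by linarith
    field_simp
    ring
end

section
/- Let β > 1 and let X be a random variable distributed on ℝ with the Cauchy-type density f_β(x) = C_β/(1+x²)^β. Then for every α with 1 < α < β and every bounded smooth function φ on ℝ such that Ent[φ²(X)] is finite, the weighted logarithmic Sobolev inequality Ent[φ²(X)] ≤ (2/ρ_{β,α}) E[(1+X²)^α (φ'(X))²] holds, where ρ_{β,α} = (2β − α)((α−1)/(2−α))^{3−2α} for 1 < α < 3/2, and ρ_{β,α} = 2β − α for 3/2 ≤ α < β (the latter case requiring β > 3/2). -/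
open MeasureTheory Set

lemma cdf_exists (p : ℝ → ℝ) (hc : Continuous p) (hp : ∀ x, 0 < p x) (hi : Integrable p)
    (h1 : ∫ x, p x = 1) : ∃ F : ℝ → ℝ, (∀ x, HasDerivAt F (p x) x) ∧ StrictMono F ∧
      (∀ x, F x ∈ Ioo (0:ℝ) 1) ∧ ∀ y ∈ Ioo (0:ℝ) 1, ∃ x, F x = y := by
  set F : ℝ → ℝ := fun x => (∫ t in Iic (0:ℝ), p t) + ∫ t in (0:ℝ)..x, p t with hF
  have hd : ∀ x, HasDerivAt F (p x) x := fun x =>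
    (intervalIntegral.integral_hasDerivAt_right (hc.intervalIntegrable _ _)
      hc.stronglyMeasurable.stronglyMeasurableAtFilter hc.continuousAt).const_add _
  have hm : StrictMono F := strictMono_of_deriv_pos (fun x => by rw [(hd x).deriv]; exact hp x)
  have hcF : Continuous F := continuous_iff_continuousAt.2 fun x => (hd x).continuousAt
  have ht : Filter.Tendsto F Filter.atTop (nhds 1) := by
    have := (intervalIntegral_tendsto_integral_Ioi (μ := volume) (f := p) 0 hi.integrableOn
      Filter.tendsto_id).const_add (∫ t in Iic (0:ℝ), p t)
    rw [intervalIntegral.integral_Iic_add_Ioi hi.integrableOn hi.integrableOn, h1] at this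
    exact this
  have hb : Filter.Tendsto F Filter.atBot (nhds 0) := by
    have := ((intervalIntegral_tendsto_integral_Iic (μ := volume) (f := p) 0 hi.integrableOn
      Filter.tendsto_id).neg).const_add (∫ t in Iic (0:ℝ), p t)
    rw [add_neg_cancel] at this
    refine this.congr fun x => ?_
    simp only [hF, id]
    rw [intervalIntegral.integral_symm 0 x]
    ring
  refine ⟨F, hd, hm, fun x => ⟨?_, ?_⟩, fun y hy => ?_⟩
  · exact lt_of_le_of_lt (hm.monotone.le_of_tendsto hb (x-1)) (hm (by linarith))
  · exact lt_of_lt_of_le (hm (by linarith)) (hm.monotone.ge_of_tendsto ht (x+1))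
  · obtain ⟨a, ha⟩ := (hb.eventually (gt_mem_nhds hy.1)).exists
    obtain ⟨b, hb⟩ := (ht.eventually (lt_mem_nhds hy.2)).exists
    exact mem_range_of_exists_le_of_exists_ge hcF ⟨a, ha.le⟩ ⟨b, hb.le⟩

lemma transport_exists (p q : ℝ → ℝ) (hcp : Continuous p) (hp : ∀ x, 0 < p x) (hip : Integrable p)
    (hp1 : ∫ x, p x = 1) (hcq : Continuous q) (hq : ∀ x, 0 < q x) (hiq : Integrable q)
    (hq1 : ∫ x, q x = 1) : ∃ S : ℝ → ℝ, ∀ x, HasDerivAt S (q x / p (S x)) x := by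
  obtain ⟨F, hF, hFm, hF1, hFs⟩ := cdf_exists p hcp hp hip hp1
  obtain ⟨Q, hQ, hQm, hQ1, hQs⟩ := cdf_exists q hcq hq hiq hq1
  choose! I hI using hFs
  refine ⟨fun x => I (Q x), fun x => ?_⟩
  have hcI : ContinuousAt I (Q x) := by
    rw [Metric.continuousAt_iff']
    intro e he
    have h1 : F (I (Q x) - e) < Q x := by
      conv_rhs => rw [← hI _ (hQ1 x)]
      exact hFm (by linarith)
    have h2 : Q x < F (I (Q x) + e) := by
      conv_lhs => rw [← hI _ (hQ1 x)]
      exact hFm (by linarith)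
    filter_upwards [lt_mem_nhds h1, gt_mem_nhds h2, Ioo_mem_nhds (hQ1 x).1 (hQ1 x).2] with y a b c
    rw [← hI y c] at a b
    have := hFm.lt_iff_lt.1 a
    have := hFm.lt_iff_lt.1 b
    rw [Real.dist_eq, abs_lt]
    constructor <;> linarith
  have hdI : HasDerivAt I (p (I (Q x)))⁻¹ (Q x) :=
    HasDerivAt.of_local_left_inverse hcI (hF _) (hp _).ne' (by
      filter_upwards [Ioo_mem_nhds (hQ1 x).1 (hQ1 x).2] with y c using hI y c)
  have := hdI.comp x (hQ x)
  exact this.congr_deriv (by rw [div_eq_inv_mul])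

lemma rho_bound (α : ℝ) (hα : 1 < α) (s : ℝ) (hs : 0 ≤ s) :
    (if α < 3 / 2 then ((α - 1) / (2 - α)) ^ (3 - 2 * α) else 1) * (1 + s) ^ (2 - α)
      ≤ 1 + (α - 1) * s := by
  split_ifs with h
  · have h2 : 0 < 2 - α := by linarith
    have h1 : 0 < α - 1 := by linarith
    set c := (α - 1) / (2 - α) with hc
    have hc0 : 0 < c := by positivity
    have hcm : c * (2 - α) = α - 1 := by rw [hc]; field_simp
    have := Real.geom_mean_le_arith_mean2_weighted h2.le h1.le
      (by positivity : 0 ≤ c^2 * (1 + s)) zero_le_one (by ring)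
    rw [Real.one_rpow, mul_one, Real.mul_rpow (by positivity) (by positivity)] at this
    have e : (c^2) ^ (2 - α) = c ^ (3 - 2 * α) * c := by
      rw [← Real.rpow_natCast, ← Real.rpow_mul hc0.le]
      nth_rw 3 [← Real.rpow_one c]
      rw [← Real.rpow_add hc0]; congr 1; push_cast; ring
    rw [e] at this
    have h3 : (2 - α) * (c^2 * (1+s)) + (α - 1) * 1 = c * (1 + (α - 1) * s) := by
      rw [← hcm]
      have : c * (2 - α) = α - 1 := hcm
      have h4 : α = 1 + c * (2-α) := by linarith
      linear_combination (c * (1+s) +0) * hcm - c * (1 + s) * hcm + c * hcm + c * s * hcm - c * s * (hcm)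
    rw [h3] at this
    have : c * (c ^ (3 - 2 * α) * (1 + s) ^ (2 - α)) ≤ c * (1 + (α - 1) * s) := by linarith
    exact le_of_mul_le_mul_left this hc0
  · rw [one_mul]
    rcases le_total α 2 with h2 | h2
    · have := rpow_one_add_le_one_add_mul_self (s := s) (p := 2 - α) (by linarith)
        (by linarith) (by linarith)
      nlinarith
    · have := Real.rpow_le_one_of_one_le_of_nonpos (x := 1 + s) (z := 2 - α) (by linarith)
        (by linarith)
      nlinarith

/-- convexity -/
lemma conv_lemma (V Y P w p' : ℝ → ℝ) (ρ : ℝ) (hV : ∀ x, HasDerivAt V (P x * w x) x)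
    (hY : ∀ x, HasDerivAt Y (w x) x) (hP : ∀ x, HasDerivAt P (p' x) x)
    (hw : ∀ x, 0 < w x) (hp : ∀ x, ρ * w x ≤ p' x) (x s : ℝ) :
    V x + P x * (Y s - Y x) + ρ / 2 * (Y s - Y x)^2 ≤ V s := by
  have hmono : Monotone (fun x => P x - ρ * Y x) := by
    apply monotone_of_hasDerivAt_nonneg (f' := fun x => p' x - ρ * w x)
    · intro x; exact (hP x).sub ((hY x).const_mul ρ)
    · intro x; simpa using hp x
  set K : ℝ → ℝ := fun s => V s - (V x + P x * (Y s - Y x) + ρ / 2 * (Y s - Y x)^2) with hK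
  have hKd : ∀ s, HasDerivAt K (w s * ((P s - ρ * Y s) - (P x - ρ * Y x))) s := by
    intro s
    have h1 := (hY s).sub_const (Y x)
    have := (hV s).sub (((h1.const_mul (P x)).const_add (V x)).add ((h1.pow 2).const_mul (ρ/2)))
    exact this.congr_deriv (by push_cast; ring)
  have hKc : Continuous K := continuous_iff_continuousAt.2 fun x => (hKd x).continuousAt
  have hKx : K x = 0 := by simp [hK]
  have : 0 ≤ K s := by
    rw [← hKx]
    rcases le_total x s with h | h
    · refine monotoneOn_of_deriv_nonneg (convex_Ici x) hKc.continuousOn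
        (fun y _ => (hKd y).differentiableAt.differentiableWithinAt) ?_ self_mem_Ici h h
      intro y hy
      rw [interior_Ici] at hy
      rw [(hKd y).deriv]
      exact mul_nonneg (hw y).le (sub_nonneg.2 (hmono (le_of_lt hy)))
    · refine antitoneOn_of_deriv_nonpos (convex_Iic x) hKc.continuousOn
        (fun y _ => (hKd y).differentiableAt.differentiableWithinAt) ?_ h self_mem_Iic h
      intro y hy
      rw [interior_Iic] at hy
      rw [(hKd y).deriv]
      exact mul_nonpos_of_nonneg_of_nonpos (hw y).le (sub_nonpos.2 (hmono (le_of_lt hy)))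
  simp only [hK] at this
  linarith

/-- pointwise inequality -/
lemma pointwise (g g' h w P D s' ws hs V Vs ρ c : ℝ) (hg : 0 < g) (hh : 0 < h) (hw : 0 < w)
    (hws : 0 < ws) (hhs : 0 < hs) (hρ : 0 < ρ) (hs' : s' = g * (h * w) / (hs * ws))
    (hl : Real.log h = c - V) (hls : Real.log hs = c - Vs)
    (hconv : V + P * D + ρ / 2 * D^2 ≤ Vs) :
    g * Real.log g * (h * w) ≤ (g' * h * D + g * (-(P * w * h)) * D + g * h * (s' * ws - w))
      + g' ^ 2 / (2 * ρ * g * w^2) * (h * w) := by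
  have e1 : Real.log (g * h / hs) = Real.log g + Real.log h - Real.log hs := by
    rw [Real.log_div (by positivity) (by positivity), Real.log_mul (by positivity) (by positivity)]
  have e2 := Real.log_le_sub_one_of_pos (show 0 < g * h / hs by positivity)
  have e3 : s' * ws = g * h / hs * w := by rw [hs']; field_simp
  have e4 : Real.log g ≤ g * h / hs - 1 - P * D - ρ / 2 * D^2 := by linarith
  have e5 := mul_le_mul_of_nonneg_left e4 (show 0 ≤ g * (h * w) by positivity)
  rw [e3]
  have e6 : 0 ≤ h / (2 * ρ * g * w) * (ρ * g * w * D + g') ^ 2 := by positivity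
  have e7 : h / (2 * ρ * g * w) * (ρ * g * w * D + g') ^ 2 =
     g' * h * D + ρ / 2 * D^2 * (g * h * w) + g' ^ 2 / (2 * ρ * g * w^2) * (h * w) := by
    field_simp; ring
  rw [e7] at e6
  linarith


lemma core (h w P Y V p' g g' r : ℝ → ℝ) (ρ c M B : ℝ) (hρ : 0 < ρ)
    (hh : ∀ x, 0 < h x) (hw : ∀ x, 0 < w x) (hwc : Continuous w)
    (hhd : ∀ x, HasDerivAt h (-(P x * w x * h x)) x)
    (hl : ∀ x, Real.log (h x) = c - V x)
    (hV : ∀ x, HasDerivAt V (P x * w x) x)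
    (hY : ∀ x, HasDerivAt Y (w x) x) (hP : ∀ x, HasDerivAt P (p' x) x)
    (hp : ∀ x, ρ * w x ≤ p' x) (hYB : ∀ x, |Y x| ≤ B)
    (ht : Filter.Tendsto h Filter.atTop (nhds 0)) (hb : Filter.Tendsto h Filter.atBot (nhds 0))
    (hi : Integrable (fun x => h x * w x)) (h1 : ∫ x, h x * w x = 1)
    (hg : ∀ x, 0 < g x) (hgM : ∀ x, g x ≤ M) (hgd : ∀ x, HasDerivAt g (g' x) x)
    (hgi : Integrable (fun x => g x * (h x * w x))) (hg1 : ∫ x, g x * (h x * w x) = 1)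
    (hri : Integrable r) (hr : ∀ x, g' x ^ 2 / (2 * ρ * g x * w x ^2) * (h x * w x) ≤ r x)
    (hai : Integrable (fun x => g x * Real.log (g x) * (h x * w x))) :
    ∫ x, g x * Real.log (g x) * (h x * w x) ≤ ∫ x, r x := by
  have hhc : Continuous h := continuous_iff_continuousAt.2 fun x => (hhd x).continuousAt
  have hgc : Continuous g := continuous_iff_continuousAt.2 fun x => (hgd x).continuousAt
  obtain ⟨S, hS⟩ := transport_exists (fun x => h x * w x) (fun x => g x * (h x * w x))
    (hhc.mul hwc) (fun x => mul_pos (hh x) (hw x)) hi h1 (hgc.mul (hhc.mul hwc))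
    (fun x => mul_pos (hg x) (mul_pos (hh x) (hw x))) hgi hg1
  set D : ℝ → ℝ := fun x => Y (S x) - Y x with hD
  set E : ℝ → ℝ := fun x => g x * h x * D x with hE
  set E' : ℝ → ℝ := fun x => g' x * h x * D x + g x * (-(P x * w x * h x)) * D x
    + g x * h x * ((g x * (h x * w x) / (h (S x) * w (S x))) * w (S x) - w x) with hE'
  have hDd : ∀ x, HasDerivAt D ((g x * (h x * w x) / (h (S x) * w (S x))) * w (S x) - w x) x :=
    fun x => (((hY (S x)).comp x (hS x)).sub (hY x)).congr_deriv (by ring)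
  have hEd : ∀ x, HasDerivAt E (E' x) x := fun x =>
    (((hgd x).mul (hhd x)).mul (hDd x)).congr_deriv (by simp only [hE', Pi.mul_apply]; ring)
  have hEc : Continuous E := continuous_iff_continuousAt.2 fun x => (hEd x).continuousAt
  have hpt : ∀ x, g x * Real.log (g x) * (h x * w x) ≤ E' x + r x := fun x => by
    have := pointwise (g x) (g' x) (h x) (w x) (P x) (D x) _ (w (S x)) (h (S x)) (V x) (V (S x)) ρ c
      (hg x) (hh x) (hw x) (hw _) (hh _) hρ rfl (hl x) (hl _)
      (conv_lemma V Y P w p' ρ hV hY hP hw hp x (S x))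
    have := hr x
    simp only [hE']
    linarith
  have hB : ∀ x, |E x| ≤ M * (2 * B) * h x := fun x => by
    have h2 : |D x| ≤ 2 * B := by
      have := abs_sub (Y (S x)) (Y x)
      have := hYB x
      have := hYB (S x)
      simp only [hD]; linarith
    simp only [hE]
    rw [abs_mul, abs_mul, abs_of_pos (hg x), abs_of_pos (hh x)]
    have h3 : g x * |D x| ≤ M * (2 * B) :=
      mul_le_mul (hgM x) h2 (abs_nonneg _) ((hg x).le.trans (hgM x))
    nlinarith [hh x]
  have lim : ∀ l : Filter ℝ, Filter.Tendsto h l (nhds 0) → Filter.Tendsto E l (nhds 0) :=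
    fun l hl => squeeze_zero_norm hB (by simpa using hl.const_mul (M * (2 * B)))
  have hfin : ∀ n : ℝ, 0 ≤ n → E (-n) - E n ≤
      ∫ x in (-n)..n, (r x - g x * Real.log (g x) * (h x * w x)) := fun n hn => by
    have := intervalIntegral.sub_le_integral_of_hasDeriv_right_of_le (g := fun x => - E x)
      (g' := fun x => - E' x) (φ := fun x => r x - g x * Real.log (g x) * (h x * w x))
      (a := -n) (b := n) (by linarith) hEc.neg.continuousOn
      (fun x _ => (hEd x).neg.hasDerivWithinAt) (hri.sub hai).integrableOn
      (fun x _ => by linarith [hpt x])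
    linarith
  have T1 := intervalIntegral_tendsto_integral (hri.sub hai) Filter.tendsto_neg_atTop_atBot
    Filter.tendsto_id
  have T2 := ((lim _ hb).comp Filter.tendsto_neg_atTop_atBot).sub (lim _ ht)
  have := le_of_tendsto_of_tendsto T2 T1 (by
    filter_upwards [Filter.eventually_ge_atTop 0] with n hn using hfin n hn)
  simp only [Pi.sub_apply] at this
  rw [integral_sub hri hai] at this
  linarith

lemma hasDerivAt_bracket (γ x : ℝ) : HasDerivAt (fun x : ℝ => (1 + x ^ 2) ^ γ)
    (2 * γ * x * (1 + x ^ 2) ^ (γ - 1)) x := by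
  have h0 : HasDerivAt (fun x : ℝ => 1 + x ^ 2) (2 * x) x :=
    ((hasDerivAt_pow 2 x).const_add 1).congr_deriv (by push_cast; ring)
  have hpos : (1 + x ^ 2 : ℝ) ≠ 0 := by positivity
  exact (h0.rpow_const (p := γ) (Or.inl hpos)).congr_deriv (by ring)

lemma eps_ineq (β α : ℝ) (hα : 1 < α) (hαβ : α < β)
    (C : ℝ) (hC : 0 < C)
    (hnorm : ∫ x : ℝ, C / (1 + x ^ 2) ^ β = 1)
    (G G' q : ℝ → ℝ) (e M κ : ℝ) (he : 0 < e) (hGe : ∀ x, e ≤ G x) (hGM : ∀ x, G x ≤ M)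
    (hGd : ∀ x, HasDerivAt G (G' x) x)
    (hq : ∀ x, G' x ^ 2 / G x ≤ 4 * q x) (hκ : 0 < κ)
    (hκb : ∀ s : ℝ, 0 ≤ s → κ * (1 + s) ^ (2 - α) ≤ 1 + (α - 1) * s)
    (hrhs : Integrable (fun x => (1 + x ^ 2) ^ α * q x * (C / (1 + x ^ 2) ^ β))) :
    (∫ x : ℝ, G x * Real.log (G x) * (C / (1 + x ^ 2) ^ β))
        - (∫ x : ℝ, G x * (C / (1 + x ^ 2) ^ β)) *
            Real.log (∫ x : ℝ, G x * (C / (1 + x ^ 2) ^ β))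
      ≤ (2 / ((2 * β - α) * κ)) *
          ∫ x : ℝ, (1 + x ^ 2) ^ α * q x * (C / (1 + x ^ 2) ^ β) := by
  have hpos : ∀ x : ℝ, (0:ℝ) < 1 + x ^ 2 := fun x => by positivity
  have hfi : Integrable (fun x : ℝ => C / (1 + x ^ 2) ^ β) := by
    by_contra hn
    rw [integral_undef hn] at hnorm
    exact zero_ne_one hnorm
  have hGpos : ∀ x, 0 < G x := fun x => he.trans_le (hGe x)
  have hGc : Continuous G := continuous_iff_continuousAt.2 fun x => (hGd x).continuousAt
  have hGi : Integrable (fun x : ℝ => G x * (C / (1 + x ^ 2) ^ β)) :=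
    hfi.bdd_mul (c := M) hGc.aestronglyMeasurable (Filter.Eventually.of_forall fun x => by
      rw [Real.norm_eq_abs, abs_of_pos (hGpos x)]; exact hGM x)
  obtain ⟨K, hK⟩ := (isCompact_Icc (a := e) (b := M)).exists_bound_of_continuousOn
    (Real.continuous_mul_log.continuousOn)
  have hGli : Integrable (fun x : ℝ => G x * Real.log (G x) * (C / (1 + x ^ 2) ^ β)) :=
    hfi.bdd_mul (c := K) (Real.continuous_mul_log.comp hGc).aestronglyMeasurable
      (Filter.Eventually.of_forall fun x => hK _ ⟨hGe x, hGM x⟩)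
  set m := ∫ x : ℝ, G x * (C / (1 + x ^ 2) ^ β) with hm
  have hm0 : 0 < m := by
    refine he.trans_le ?_
    have : ∫ x : ℝ, e * (C / (1 + x ^ 2) ^ β) ≤ m :=
      integral_mono (hfi.const_mul e) hGi fun x =>
        mul_le_mul_of_nonneg_right (hGe x) (by have := hpos x; positivity)
    rwa [integral_const_mul, hnorm, mul_one] at this
  set ρ := (2 * β - α) * κ with hρd
  have hba : 0 < 2 * β - α := by linarith
  have hρ : 0 < ρ := by positivity
  -- data
  set w : ℝ → ℝ := fun x => (1 + x ^ 2) ^ (-α / 2) with hw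
  set h : ℝ → ℝ := fun x => C * (1 + x ^ 2) ^ (α / 2 - β) with hh
  have hf : ∀ x, h x * w x = C / (1 + x ^ 2) ^ β := fun x => by
    simp only [hh, hw]
    rw [mul_assoc, ← Real.rpow_add (hpos x), div_eq_mul_inv C, ← Real.rpow_neg (hpos x).le]
    congr 2; ring
  have hbc : ∀ γ : ℝ, Continuous fun x : ℝ => (1 + x ^ 2) ^ γ := fun γ =>
    continuous_iff_continuousAt.2 fun x => (hasDerivAt_bracket γ x).continuousAt
  have hwc : Continuous w := hbc _
  have hwi : Integrable w := by
    have := integrable_rpow_neg_one_add_norm_sq (E := ℝ) (μ := volume) (r := α) (by simpa using hα)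
    simpa [hw] using this
  have hwpos : ∀ x, 0 < w x := fun x => Real.rpow_pos_of_pos (hpos x) _
  have hhpos : ∀ x, 0 < h x := fun x => mul_pos hC (Real.rpow_pos_of_pos (hpos x) _)
  set P : ℝ → ℝ := fun x => (2 * β - α) * x * (1 + x ^ 2) ^ (α / 2 - 1) with hP
  have hT : Filter.Tendsto (fun y : ℝ => C * y ^ (α / 2 - β)) Filter.atTop (nhds 0) := by
    have := (tendsto_rpow_neg_atTop (y := β - α / 2) (by linarith)).const_mul C
    simpa using this
  have hsq : Filter.Tendsto (fun x : ℝ => x ^ 2) Filter.atBot Filter.atTop := by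
    have := (Filter.tendsto_pow_atTop (α := ℝ) two_ne_zero).comp Filter.tendsto_neg_atBot_atTop
    refine this.congr fun x => ?_
    simp
  have hPw : ∀ x, P x * w x = (2 * β - α) * x / (1 + x ^ 2) := fun x => by
    simp only [hP, hw]
    rw [mul_assoc, ← Real.rpow_add (hpos x), div_eq_mul_inv _ (1 + x ^ 2), ← Real.rpow_neg_one]
    congr 2; ring
  have hw2 : ∀ x, (w x ^ 2)⁻¹ = (1 + x ^ 2) ^ α := fun x => by
    simp only [hw]
    rw [← Real.rpow_natCast, ← Real.rpow_mul (hpos x).le, ← Real.rpow_neg (hpos x).le]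
    congr 1; push_cast; ring
  have key := core h w P (fun x => ∫ t in (0:ℝ)..x, w t)
    (fun x => (β - α / 2) * Real.log (1 + x ^ 2))
    (fun x => (2 * β - α) * (1 + x ^ 2) ^ (α / 2 - 2) * (1 + (α - 1) * x ^ 2))
    (fun x => G x / m) (fun x => G' x / m)
    (fun x => 2 / (ρ * m) * ((1 + x ^ 2) ^ α * q x * (C / (1 + x ^ 2) ^ β)))
    ρ (Real.log C) (M / m) (∫ x, ‖w x‖) hρ hhpos hwpos hwc
    (fun x => ((hasDerivAt_bracket (α / 2 - β) x).const_mul C).congr_deriv (by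
      rw [hPw, Real.rpow_sub_one (hpos x).ne']; simp only [hh]; have := hpos x; field_simp; ring))
    (fun x => by
      simp only [hh]
      rw [Real.log_mul hC.ne' (Real.rpow_pos_of_pos (hpos x) _).ne', Real.log_rpow (hpos x)]; ring)
    (fun x => by
      have h0 : HasDerivAt (fun x : ℝ => 1 + x ^ 2) (2 * x) x :=
        ((hasDerivAt_pow 2 x).const_add 1).congr_deriv (by push_cast; ring)
      exact ((h0.log (hpos x).ne').const_mul (β - α / 2)).congr_deriv (by
        rw [hPw]; have := hpos x; field_simp))
    (fun x => intervalIntegral.integral_hasDerivAt_right (hwc.intervalIntegrable _ _)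
      hwc.stronglyMeasurable.stronglyMeasurableAtFilter hwc.continuousAt)
    (fun x => by
      have h1 := ((hasDerivAt_id x).const_mul (2 * β - α)).mul (hasDerivAt_bracket (α / 2 - 1) x)
      refine h1.congr_deriv ?_
      have e1 : (1 + x ^ 2) ^ (α / 2 - 1) = (1 + x ^ 2) ^ (α / 2 - 2) * (1 + x ^ 2) := by
        rw [← Real.rpow_add_one (hpos x).ne']; congr 1; ring
      have e2 : α / 2 - 1 - 1 = α / 2 - 2 := by ring
      rw [e2, e1]; simp only [id]; ring)
    (fun x => by
      have := hκb (x ^ 2) (sq_nonneg x)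
      have e1 : (1 + x ^ 2) ^ (-α / 2) = (1 + x ^ 2) ^ (α / 2 - 2) * (1 + x ^ 2) ^ (2 - α) := by
        rw [← Real.rpow_add (hpos x)]; congr 1; ring
      simp only [hw, hρd]
      rw [e1]
      have h3 := mul_le_mul_of_nonneg_left this (show 0 ≤ (2 * β - α) * (1 + x ^ 2) ^ (α / 2 - 2)
        from mul_nonneg hba.le (Real.rpow_pos_of_pos (hpos x) _).le)
      linarith)
    (fun x => by
      rw [← Real.norm_eq_abs]
      refine (intervalIntegral.norm_integral_le_integral_norm_uIoc).trans ?_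
      exact setIntegral_le_integral hwi.norm (Filter.Eventually.of_forall fun x => norm_nonneg _))
    (hT.comp (Filter.tendsto_atTop_add_const_left _ 1 (Filter.tendsto_pow_atTop two_ne_zero)))
    (hT.comp (Filter.tendsto_atTop_add_const_left _ 1 (hsq)))
    (by simpa only [hf] using hfi) (by simpa only [hf] using hnorm)
    (fun x => div_pos (hGpos x) hm0) (fun x => by have := hGM x; gcongr)
    (fun x => (hGd x).div_const m)
    (by simp only [hf]; exact (hGi.div_const m).congr (Filter.Eventually.of_forall fun x => by ring))
    (by
      simp only [hf]
      have : ∫ x : ℝ, G x / m * (C / (1 + x ^ 2) ^ β) = ∫ x : ℝ, m⁻¹ * (G x * (C / (1 + x ^ 2) ^ β)) :=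
        integral_congr_ae (Filter.Eventually.of_forall fun x => by ring)
      rw [this, integral_const_mul, ← hm, inv_mul_cancel₀ hm0.ne'])
    (hrhs.const_mul _)
    (fun x => by
      rw [hf, ← hw2]
      have h1 := hq x
      have h2 := hGpos x
      have h3 := hwpos x
      have h4 : 0 ≤ C / (1 + x ^ 2) ^ β := by have := hpos x; positivity
      have e1 : (G' x / m) ^ 2 / (2 * ρ * (G x / m) * w x ^ 2) =
          (G' x ^ 2 / G x) * (1 / (2 * ρ * m) * (w x ^ 2)⁻¹) := by field_simp
      have h5 := mul_le_mul_of_nonneg_right h1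
        (show 0 ≤ (1 / (2 * ρ * m) * (w x ^ 2)⁻¹) by positivity)
      rw [e1]
      refine (mul_le_mul_of_nonneg_right h5 h4).trans (le_of_eq ?_)
      field_simp; ring)
    (by
      simp only [hf]
      refine ((hGli.sub (hGi.mul_const (Real.log m))).const_mul m⁻¹).congr
        (Filter.Eventually.of_forall fun x => ?_)
      simp only [Pi.sub_apply]
      rw [Real.log_div (hGpos x).ne' hm0.ne']; ring)
  simp only [hf] at key
  have e1 : ∫ x : ℝ, G x / m * Real.log (G x / m) * (C / (1 + x ^ 2) ^ β) =
      m⁻¹ * ((∫ x : ℝ, G x * Real.log (G x) * (C / (1 + x ^ 2) ^ β)) - m * Real.log m) := by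
    rw [hm, ← integral_mul_const, ← integral_sub hGli (hGi.mul_const _), ← integral_const_mul]
    refine integral_congr_ae (Filter.Eventually.of_forall fun x => ?_)
    simp only [← hm]
    rw [Real.log_div (hGpos x).ne' hm0.ne']; ring
  rw [e1, integral_const_mul] at key
  have := mul_le_mul_of_nonneg_left key hm0.le
  rw [mul_inv_cancel_left₀ hm0.ne'] at this
  refine this.trans (le_of_eq ?_)
  rw [← mul_assoc]
  congr 1
  field_simp

theorem log_sobolev_cauchy_type
    (β α : ℝ) (hβ : 1 < β) (hα : 1 < α) (hαβ : α < β)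
    (C : ℝ) (hC : 0 < C)
    (hnorm : ∫ x : ℝ, C / (1 + x ^ 2) ^ β = 1)
    (φ : ℝ → ℝ) (hφ : ContDiff ℝ (⊤ : ℕ∞) φ) (hbdd : ∃ M, ∀ x, |φ x| ≤ M)
    (hint : Integrable (fun x => φ x ^ 2 * (C / (1 + x ^ 2) ^ β)))
    (hent : Integrable (fun x => φ x ^ 2 * Real.log (φ x ^ 2) * (C / (1 + x ^ 2) ^ β)))
    (hrhs : Integrable (fun x => (1 + x ^ 2) ^ α * (deriv φ x) ^ 2 * (C / (1 + x ^ 2) ^ β))) :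
    (∫ x : ℝ, φ x ^ 2 * Real.log (φ x ^ 2) * (C / (1 + x ^ 2) ^ β))
        - (∫ x : ℝ, φ x ^ 2 * (C / (1 + x ^ 2) ^ β)) *
            Real.log (∫ x : ℝ, φ x ^ 2 * (C / (1 + x ^ 2) ^ β))
      ≤ (2 / (if α < 3 / 2 then (2 * β - α) * ((α - 1) / (2 - α)) ^ (3 - 2 * α)
            else 2 * β - α)) *
          ∫ x : ℝ, (1 + x ^ 2) ^ α * (deriv φ x) ^ 2 * (C / (1 + x ^ 2) ^ β) := by
  have hpos : ∀ x : ℝ, (0:ℝ) < 1 + x ^ 2 := fun x => by positivity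
  obtain ⟨M, hM⟩ := hbdd
  have hfi : Integrable (fun x : ℝ => C / (1 + x ^ 2) ^ β) := by
    by_contra hn
    rw [integral_undef hn] at hnorm
    exact zero_ne_one hnorm
  have hM2 : ∀ x, φ x ^ 2 ≤ M ^ 2 := fun x => sq_le_sq' (abs_le.1 (hM x)).1 (abs_le.1 (hM x)).2
  have hφc : Continuous φ := hφ.continuous
  have hφd : ∀ x, HasDerivAt φ (deriv φ x) x := fun x =>
    (hφ.differentiable (by simp) x).hasDerivAt
  set κ : ℝ := if α < 3 / 2 then ((α - 1) / (2 - α)) ^ (3 - 2 * α) else 1 with hκ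
  have hκ0 : 0 < κ := by
    rw [hκ]; split_ifs with h
    · exact Real.rpow_pos_of_pos (div_pos (by linarith) (by linarith)) _
    · exact one_pos
  have hρ : (if α < 3 / 2 then (2 * β - α) * ((α - 1) / (2 - α)) ^ (3 - 2 * α)
            else 2 * β - α) = (2 * β - α) * κ := by
    rw [hκ]; split_ifs <;> simp
  rw [hρ]
  have main : ∀ e : ℝ, 0 < e → _ := fun e he =>
    eps_ineq β α hα hαβ C hC hnorm (fun x => φ x ^ 2 + e) (fun x => 2 * φ x * deriv φ x)
    (fun x => deriv φ x ^ 2) e (M ^ 2 + e) κ he (fun x => by nlinarith [sq_nonneg (φ x)])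
    (fun x => by linarith [hM2 x])
    (fun x => (((hφd x).pow 2).add_const e).congr_deriv (by push_cast; ring))
    (fun x => by
      have : 0 < φ x ^ 2 + e := by positivity
      rw [div_le_iff₀ this]
      nlinarith [mul_nonneg he.le (sq_nonneg (deriv φ x))])
    hκ0 (fun s hs => rho_bound α hα s hs) hrhs
  obtain ⟨K, hK⟩ := (isCompact_Icc (a := (0:ℝ)) (b := M ^ 2 + 1)).exists_bound_of_continuousOn
    (Real.continuous_mul_log.continuousOn)
  have hmeas : AEStronglyMeasurable (fun x : ℝ => C / (1 + x ^ 2) ^ β) := hfi.aestronglyMeasurable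
  have hev : ∀ᶠ e : ℝ in nhdsWithin 0 (Ioi 0), e ∈ Ioo (0:ℝ) 1 :=
    Ioo_mem_nhdsGT one_pos
  have ht : ∀ a : ℝ, Filter.Tendsto (fun e : ℝ => a + e) (nhdsWithin 0 (Ioi 0)) (nhds a) :=
    fun a => ((continuous_const.add continuous_id).tendsto' 0 a (by simp)).mono_left
      nhdsWithin_le_nhds
  have T1 : Filter.Tendsto (fun e : ℝ => ∫ x : ℝ, (φ x ^ 2 + e) * Real.log (φ x ^ 2 + e) *
      (C / (1 + x ^ 2) ^ β)) (nhdsWithin 0 (Ioi 0))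
      (nhds (∫ x : ℝ, φ x ^ 2 * Real.log (φ x ^ 2) * (C / (1 + x ^ 2) ^ β))) := by
    refine tendsto_integral_filter_of_dominated_convergence
      (fun x => K * (C / (1 + x ^ 2) ^ β)) (Filter.Eventually.of_forall fun e => ?_) ?_
      (hfi.const_mul K) (Filter.Eventually.of_forall fun x => ?_)
    · exact (Real.continuous_mul_log.comp
        ((hφc.pow 2).add continuous_const)).aestronglyMeasurable.mul hmeas
    · filter_upwards [hev] with e he
      refine Filter.Eventually.of_forall fun x => ?_
      have h4 : 0 ≤ C / (1 + x ^ 2) ^ β := by have := hpos x; positivity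
      rw [norm_mul, Real.norm_of_nonneg h4]
      exact mul_le_mul_of_nonneg_right
        (hK _ ⟨by nlinarith [sq_nonneg (φ x), he.1], by linarith [hM2 x, he.2]⟩) h4
    · exact ((Real.continuous_mul_log.tendsto (φ x ^ 2)).comp (ht _)).mul_const _
  have hme : ∀ e : ℝ, ∫ x : ℝ, (φ x ^ 2 + e) * (C / (1 + x ^ 2) ^ β) =
      (∫ x : ℝ, φ x ^ 2 * (C / (1 + x ^ 2) ^ β)) + e := fun e => by
    simp only [add_mul]
    rw [integral_add hint (hfi.const_mul e), integral_const_mul, hnorm, mul_one]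
  have T2 := (Real.continuous_mul_log.tendsto (∫ x : ℝ, φ x ^ 2 * (C / (1 + x ^ 2) ^ β))).comp (ht _)
  refine le_of_tendsto (T1.sub T2) ?_
  filter_upwards [hev] with e he
  have := main e he.1
  rw [hme] at this
  exact this
end

section
/- Let β > 1 and f_β(x) = C_β/(1+x²)^β be the Cauchy-type density on ℝ. For every α with 1 < α < β and every smooth probability density f on ℝ that is absolutely continuous with respect to f_β, the relative-entropy form of the weighted logarithmic Sobolev inequality holds: ∫_ℝ f(x) log(f(x)/f_β(x)) dx ≤ (1/(2ρ_{β,α})) ∫_ℝ (1+x²)^α (d/dx log(f(x)/f_β(x)))² f(x) dx, where ρ_{β,α} = (2β − α)((α−1)/(2−α))^{3−2α} for 1 < α < 3/2 and ρ_{β,α} = 2β − α for 3/2 ≤ α < β. -/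
open MeasureTheory Set Filter Topology

namespace CauchyLSI

lemma rho_bound (α s : ℝ) (hα : 1 < α) (hs : 0 ≤ s) :
    (if α < 3 / 2 then ((α - 1) / (2 - α)) ^ (3 - 2 * α) else 1)
      ≤ (1 + s) ^ (α - 2) * (1 + (α - 1) * s) := by
  have h1 : 0 < 1 + s := by linarith
  have key : ∀ m : ℝ, m * (1 + s) ^ (2 - α) ≤ 1 + (α - 1) * s →
      m ≤ (1 + s) ^ (α - 2) * (1 + (α - 1) * s) := by
    intro m hm
    have h2 : (1 + s) ^ (α - 2) * (1 + s) ^ (2 - α) = 1 := by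
      rw [← Real.rpow_add h1]; simp
    have h3 : 0 < (1 + s) ^ (α - 2) := Real.rpow_pos_of_pos h1 _
    calc m = (1 + s) ^ (α - 2) * (m * (1 + s) ^ (2 - α)) := by
            linear_combination (-m) * h2
      _ ≤ _ := mul_le_mul_of_nonneg_left hm h3.le
  apply key
  split_ifs with h
  · set m := (α - 1) / (2 - α) with hm
    have h2 : 0 < 2 - α := by linarith
    have hm0 : 0 < m := div_pos (by linarith) h2
    have ag := Real.geom_mean_le_arith_mean2_weighted (w₁ := 2 - α) (w₂ := α - 1)
      (p₁ := 1 + s) (p₂ := m ^ (-2 : ℝ)) h2.le (by linarith) h1.le (by positivity) (by ring)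
    have e1 : m ^ (3 - 2 * α) = m * (m ^ (-2 : ℝ)) ^ (α - 1) := by
      rw [← Real.rpow_mul hm0.le]
      nth_rewrite 2 [← Real.rpow_one m]
      rw [← Real.rpow_add hm0]; congr 1; ring
    have e2 : m * m ^ (-2 : ℝ) = m⁻¹ := by
      nth_rewrite 1 [← Real.rpow_one m]
      rw [← Real.rpow_add hm0, ← Real.rpow_neg_one]; norm_num
    have e3 : m * (2 - α) = α - 1 := by rw [hm]; field_simp
    have e4 : (α - 1) * m⁻¹ = 2 - α := by
      rw [hm]; have : α - 1 ≠ 0 := by linarith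
      field_simp
    calc m ^ (3 - 2 * α) * (1 + s) ^ (2 - α)
        = m * ((1 + s) ^ (2 - α) * (m ^ (-2 : ℝ)) ^ (α - 1)) := by rw [e1]; ring
      _ ≤ m * ((2 - α) * (1 + s) + (α - 1) * m ^ (-2 : ℝ)) :=
          mul_le_mul_of_nonneg_left ag hm0.le
      _ = (m * (2 - α)) * (1 + s) + (α - 1) * (m * m ^ (-2 : ℝ)) := by ring
      _ = 1 + (α - 1) * s := by rw [e2, e3, e4]; ring
  · rw [one_mul]
    by_cases h2 : α ≤ 2
    · have := rpow_one_add_le_one_add_mul_self (s := s) (by linarith) (p := 2 - α)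
        (by linarith) (by linarith)
      nlinarith
    · have : (1 + s) ^ (2 - α) ≤ 1 :=
        Real.rpow_le_one_of_one_le_of_nonpos (by linarith) (by linarith)
      nlinarith

lemma cdf_exists (f : ℝ → ℝ) (hc : Continuous f) (hpos : ∀ x, 0 < f x)
    (h1 : ∫ x, f x = 1) :
    ∃ F : ℝ → ℝ, (∀ x, HasStrictDerivAt F (f x) x) ∧ StrictMono F ∧
      Tendsto F atBot (𝓝 0) ∧ Tendsto F atTop (𝓝 1) := by
  have hi : Integrable f := integrable_of_integral_eq_one h1
  have hd : ∀ x, HasStrictDerivAt (fun x => (∫ t in Iic (0:ℝ), f t) + ∫ t in (0:ℝ)..x, f t)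
      (f x) x := fun x =>
    (intervalIntegral.integral_hasStrictDerivAt_right (hc.intervalIntegrable _ _)
      (hc.stronglyMeasurableAtFilter _ _) hc.continuousAt).const_add _
  refine ⟨fun x => (∫ t in Iic (0:ℝ), f t) + ∫ t in (0:ℝ)..x, f t, hd, ?_, ?_, ?_⟩
  · apply strictMono_of_deriv_pos
    intro x
    rw [(hd x).hasDerivAt.deriv]; exact hpos x
  · have := (intervalIntegral_tendsto_integral_Iic (0:ℝ) hi.integrableOn tendsto_id).const_sub
      (∫ t in Iic (0:ℝ), f t)
    rw [sub_self] at this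
    refine this.congr fun x => ?_
    simp only [id]
    rw [intervalIntegral.integral_symm 0 x]; ring
  · have := (intervalIntegral_tendsto_integral_Ioi (0:ℝ) hi.integrableOn tendsto_id).const_add
      (∫ t in Iic (0:ℝ), f t)
    rw [intervalIntegral.integral_Iic_add_Ioi hi.integrableOn hi.integrableOn, h1] at this
    exact this

lemma transport_exists (f q : ℝ → ℝ) (hfc : Continuous f) (hfpos : ∀ x, 0 < f x)
    (hf1 : ∫ x, f x = 1) (hqc : Continuous q) (hqpos : ∀ x, 0 < q x) (hq1 : ∫ x, q x = 1) :
    ∃ T : ℝ → ℝ, ∀ x, HasDerivAt T (f x / q (T x)) x := by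
  obtain ⟨F, Fd, Fm, F0, F1⟩ := cdf_exists f hfc hfpos hf1
  obtain ⟨Q, Qd, Qm, Q0, Q1⟩ := cdf_exists q hqc hqpos hq1
  have hFpos : ∀ x, 0 < F x := fun x =>
    lt_of_le_of_lt (Fm.monotone.le_of_tendsto F0 (x - 1)) (Fm (by linarith))
  have hFlt : ∀ x, F x < 1 := fun x =>
    lt_of_lt_of_le (Fm (show x < x + 1 by linarith)) (Fm.monotone.ge_of_tendsto F1 (x + 1))
  have Qc : Continuous Q := continuous_iff_continuousAt.2 fun x => (Qd x).hasDerivAt.continuousAt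
  have hex : ∀ x, ∃ z, Q z = F x := by
    intro x
    obtain ⟨a, ha⟩ := (Q0.eventually (gt_mem_nhds (hFpos x))).exists
    obtain ⟨b, hb⟩ := (Q1.eventually (lt_mem_nhds (hFlt x))).exists
    exact mem_range_of_exists_le_of_exists_ge Qc ⟨a, ha.le⟩ ⟨b, hb.le⟩
  have hS : ∀ z, Function.invFun Q (Q z) = z := Function.leftInverse_invFun Qm.injective
  refine ⟨fun x => Function.invFun Q (F x), fun x => ?_⟩
  obtain ⟨z, hz⟩ := hex x
  have hSz := (Qd z).to_local_left_inverse (hqpos z).ne' (Eventually.of_forall hS)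
  have e : Function.invFun Q (F x) = z := by rw [← hz, hS]
  rw [hz] at hSz
  have := hSz.hasDerivAt.comp x (Fd x).hasDerivAt
  simp only [e]
  rw [div_eq_inv_mul]
  exact this

lemma exists_small (f : ℝ → ℝ) (hi : Integrable f) (ε N : ℝ)
    (hε : 0 < ε) (hN : 0 < N) : ∃ x, N < x ∧ x * f x < ε := by
  by_contra! h
  apply not_integrableOn_Ioi_inv (a := N)
  have hi2 : IntegrableOn (fun x => ε⁻¹ * f x) (Ioi N) := (hi.const_mul _).integrableOn
  refine Integrable.mono' hi2 (by fun_prop) ?_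
  filter_upwards [ae_restrict_mem measurableSet_Ioi] with x hx
  have hx0 : 0 < x := hN.trans hx
  have := h x hx
  rw [Real.norm_of_nonneg (by positivity), inv_eq_one_div, inv_mul_eq_div,
    div_le_div_iff₀ hx0 hε]
  linarith

end CauchyLSI

namespace CauchyLSI

lemma kpos (x : ℝ) : 0 < 1 + x ^ 2 := by positivity

lemma hasDeriv_pow (p x : ℝ) :
    HasDerivAt (fun x : ℝ => (1 + x ^ 2) ^ p) (p * (2 * x) * (1 + x ^ 2) ^ (p - 1)) x := by
  have h : HasDerivAt (fun x : ℝ => 1 + x ^ 2) (2 * x) x := by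
    simpa using (hasDerivAt_pow 2 x).const_add 1
  have := h.rpow_const (p := p) (Or.inl (kpos x).ne')
  convert! this using 1
  ring

lemma cont_pow (p : ℝ) : Continuous (fun x : ℝ => (1 + x ^ 2) ^ p) :=
  continuous_iff_continuousAt.2 fun x => (hasDeriv_pow p x).continuousAt

noncomputable def Y (α x : ℝ) : ℝ := ∫ t in (0:ℝ)..x, (1 + t ^ 2) ^ (-(α / 2))

lemma hasDeriv_Y (α x : ℝ) : HasDerivAt (Y α) ((1 + x ^ 2) ^ (-(α / 2))) x := by
  have hc := cont_pow (-(α / 2))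
  exact intervalIntegral.integral_hasDerivAt_right (hc.intervalIntegrable _ _)
      (hc.stronglyMeasurableAtFilter _ _) hc.continuousAt

lemma Y_neg (α x : ℝ) : Y α (-x) = - Y α x := by
  unfold Y
  have := intervalIntegral.integral_comp_neg (a := 0) (b := x)
    (fun t : ℝ => (1 + t ^ 2) ^ (-(α / 2)))
  simp only [neg_sq, neg_zero] at this
  rw [this, ← intervalIntegral.integral_symm]

lemma Y_tail (α : ℝ) (hα : 1 < α) (x z : ℝ) (hx : 0 < x) :
    Y α z - Y α x ≤ x ^ (1 - α) / (α - 1) := by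
  have hmono : Monotone (Y α) := by
    apply monotone_of_deriv_nonneg
    · exact fun x => (hasDeriv_Y α x).differentiableAt
    · intro x; rw [(hasDeriv_Y α x).deriv]; exact (Real.rpow_pos_of_pos (kpos x) _).le
  have h0 : 0 < α - 1 := by linarith
  rcases le_total z x with h | h
  · have := hmono h
    have : 0 ≤ x ^ (1 - α) / (α - 1) := by positivity
    linarith
  · have hd : ∀ t : ℝ, 0 < t → HasDerivAt (fun t => Y α t + t ^ (1 - α) / (α - 1))
        ((1 + t ^ 2) ^ (-(α / 2)) + (1 - α) * t ^ (1 - α - 1) / (α - 1)) t := by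
      intro t ht
      exact (hasDeriv_Y α t).add ((Real.hasDerivAt_rpow_const (Or.inl ht.ne')).div_const _)
    have ha : AntitoneOn (fun t => Y α t + t ^ (1 - α) / (α - 1)) (Ioi 0) := by
      apply antitoneOn_of_deriv_nonpos (convex_Ioi 0)
      · exact fun t ht => (hd t ht).continuousAt.continuousWithinAt
      · rw [interior_Ioi]
        exact fun t ht => (hd t ht).differentiableAt.differentiableWithinAt
      · rw [interior_Ioi]
        intro t ht
        have ht : 0 < t := ht
        rw [(hd t ht).deriv]
        have e : (1 - α) * t ^ (1 - α - 1) / (α - 1) = - (t ^ 2) ^ (-(α / 2)) := by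
          rw [← Real.rpow_natCast t 2, ← Real.rpow_mul ht.le]
          have : ((2 : ℕ) : ℝ) * -(α / 2) = 1 - α - 1 := by push_cast; ring
          rw [this]; field_simp; ring
        rw [e]
        have := Real.rpow_le_rpow_of_nonpos (x := t ^ 2) (y := 1 + t ^ 2) (z := -(α / 2))
          (by positivity) (by linarith) (by linarith)
        linarith
    have := ha (mem_Ioi.2 hx) (mem_Ioi.2 (hx.trans_le h)) h
    simp only at this
    have : 0 ≤ z ^ (1 - α) / (α - 1) := by
      have := hx.trans_le h
      positivity
    linarith

lemma wY_tail (α : ℝ) (hα : 1 < α) (x z : ℝ) (hx : 1 ≤ x) :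
    (1 + x ^ 2) ^ (α / 2) * (Y α z - Y α x) ≤ 2 ^ (α / 2) / (α - 1) * x := by
  have hx0 : 0 < x := by linarith
  have h0 : 0 < α - 1 := by linarith
  have h1 : (1 + x ^ 2) ^ (α / 2) ≤ 2 ^ (α / 2) * x ^ α := by
    have : (2 : ℝ) ^ (α / 2) * x ^ α = (2 * x ^ 2) ^ (α / 2) := by
      rw [Real.mul_rpow (by norm_num) (by positivity), ← Real.rpow_natCast x 2,
        ← Real.rpow_mul hx0.le]
      congr 2; push_cast; ring
    rw [this]
    apply Real.rpow_le_rpow (kpos x).le (by nlinarith) (by linarith)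
  have e : x ^ α * x ^ (1 - α) = x := by
    rw [← Real.rpow_add hx0]; simp
  calc _ ≤ (1 + x ^ 2) ^ (α / 2) * (x ^ (1 - α) / (α - 1)) :=
        mul_le_mul_of_nonneg_left (Y_tail α hα x z hx0) (Real.rpow_pos_of_pos (kpos x) _).le
    _ ≤ 2 ^ (α / 2) * x ^ α * (x ^ (1 - α) / (α - 1)) :=
        mul_le_mul_of_nonneg_right h1 (by positivity)
    _ = 2 ^ (α / 2) / (α - 1) * (x ^ α * x ^ (1 - α)) := by ring
    _ = _ := by rw [e]

lemma convexity (α β ρ : ℝ)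
    (hρ : ∀ x : ℝ, ρ ≤ (2 * β - α) * ((1 + x ^ 2) ^ (α - 2) * (1 + (α - 1) * x ^ 2)))
    (x z : ℝ) :
    (2 * β - α) * x * (1 + x ^ 2) ^ (α / 2 - 1) * (Y α z - Y α x)
      + ρ / 2 * (Y α z - Y α x) ^ 2
    ≤ (β - α / 2) * Real.log (1 + z ^ 2) - (β - α / 2) * Real.log (1 + x ^ 2) := by
  set p : ℝ → ℝ := fun x => (2 * β - α) * x * (1 + x ^ 2) ^ (α / 2 - 1) with hp
  have hB : Monotone (fun z => p z - ρ * Y α z) := by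
    have hd : ∀ z, HasDerivAt (fun z => p z - ρ * Y α z)
      ((2 * β - α) * (1 + z ^ 2) ^ (α / 2 - 1) + (2 * β - α) * z *
        ((α / 2 - 1) * (2 * z) * (1 + z ^ 2) ^ (α / 2 - 1 - 1)) - ρ * (1 + z ^ 2) ^ (-(α / 2))) z := by
      intro z
      have h1 : HasDerivAt (fun z : ℝ => (2 * β - α) * z) (2 * β - α) z := by
        simpa using (hasDerivAt_id z).const_mul (2 * β - α)
      exact (h1.mul (hasDeriv_pow _ z)).sub ((hasDeriv_Y α z).const_mul ρ)
    apply monotone_of_deriv_nonneg (fun z => (hd z).differentiableAt)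
    intro z
    rw [(hd z).deriv]
    have k := kpos z
    have e1 : (1 + z ^ 2) ^ (α / 2 - 1) =
        (1 + z ^ 2) ^ (-(α / 2)) * (1 + z ^ 2) ^ (α - 2) * (1 + z ^ 2) := by
      nth_rewrite 4 [← Real.rpow_one (1 + z ^ 2)]
      rw [← Real.rpow_add k, ← Real.rpow_add k]; congr 1; ring
    have e2 : (1 + z ^ 2) ^ (α / 2 - 1 - 1) =
        (1 + z ^ 2) ^ (-(α / 2)) * (1 + z ^ 2) ^ (α - 2) := by
      rw [← Real.rpow_add k]; congr 1; ring
    rw [e1, e2]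
    have := mul_nonneg (Real.rpow_pos_of_pos k (-(α / 2))).le (sub_nonneg.2 (hρ z))
    refine this.trans_eq ?_
    ring
  set D : ℝ → ℝ := fun z => (β - α / 2) * Real.log (1 + z ^ 2) - p x * Y α z
    - ρ / 2 * (Y α z - Y α x) ^ 2 with hD
  have hd : ∀ z, HasDerivAt D ((1 + z ^ 2) ^ (-(α / 2)) *
      ((p z - ρ * Y α z) - (p x - ρ * Y α x))) z := by
    intro z
    have k := kpos z
    have h : HasDerivAt (fun x : ℝ => 1 + x ^ 2) (2 * z) z := by
      simpa using (hasDerivAt_pow 2 z).const_add 1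
    have h1 := ((h.log k.ne').const_mul (β - α / 2)).sub ((hasDeriv_Y α z).const_mul (p x))
    have h2 := h1.sub ((((hasDeriv_Y α z).sub_const (Y α x)).pow 2).const_mul (ρ / 2))
    convert! h2 using 1
    have e : (1 + z ^ 2) ^ (-(α / 2)) * (1 + z ^ 2) ^ (α / 2 - 1) = (1 + z ^ 2)⁻¹ := by
      rw [← Real.rpow_add k, ← Real.rpow_neg_one]; congr 1; ring
    have e' : (1 + z ^ 2) ^ (-(α / 2)) * p z = (β - α / 2) * (2 * z / (1 + z ^ 2)) := by
      rw [hp]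
      linear_combination (2 * β - α) * z * e
    push_cast
    linear_combination e'
  have hmin : D x ≤ D z := by
    rcases le_total x z with h | h
    · have : MonotoneOn D (Ici x) := by
        apply monotoneOn_of_deriv_nonneg (convex_Ici x)
        · exact fun t _ => (hd t).continuousAt.continuousWithinAt
        · exact fun t _ => (hd t).differentiableAt.differentiableWithinAt
        · intro t ht
          rw [interior_Ici] at ht
          rw [(hd t).deriv]
          exact mul_nonneg (Real.rpow_pos_of_pos (kpos t) _).le
            (sub_nonneg.2 (hB (le_of_lt ht)))
      exact this self_mem_Ici h h
    · have : AntitoneOn D (Iic x) := by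
        apply antitoneOn_of_deriv_nonpos (convex_Iic x)
        · exact fun t _ => (hd t).continuousAt.continuousWithinAt
        · exact fun t _ => (hd t).differentiableAt.differentiableWithinAt
        · intro t ht
          rw [interior_Iic] at ht
          rw [(hd t).deriv]
          exact mul_nonpos_of_nonneg_of_nonpos (Real.rpow_pos_of_pos (kpos t) _).le
            (sub_nonpos.2 (hB (le_of_lt ht)))
      exact this h self_mem_Iic h
  simp only [hD, sub_self] at hmin
  have e0 : (2 * β - α) * x * (1 + x ^ 2) ^ (α / 2 - 1) = p x := rfl
  try rw [e0]
  linarith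

/-- the main inequality for positive densities -/
lemma core (β α : ℝ) (hα : 1 < α) (C : ℝ) (hC : 0 < C)
    (hnorm : ∫ x : ℝ, C / (1 + x ^ 2) ^ β = 1) (ρ : ℝ) (hρ0 : 0 < ρ)
    (hρ : ∀ x : ℝ, ρ ≤ (2 * β - α) * ((1 + x ^ 2) ^ (α - 2) * (1 + (α - 1) * x ^ 2)))
    (f f' : ℝ → ℝ) (hf : ∀ x, HasDerivAt f (f' x) x) (hpos : ∀ x, 0 < f x)
    (h1 : ∫ x, f x = 1)
    (hl : Integrable (fun x => f x * Real.log (f x / (C / (1 + x ^ 2) ^ β))))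
    (hr : Integrable (fun x => (1 + x ^ 2) ^ α *
      (f' x / f x + 2 * β * x / (1 + x ^ 2)) ^ 2 * f x)) :
    (∫ x, f x * Real.log (f x / (C / (1 + x ^ 2) ^ β))) ≤ (1 / (2 * ρ)) *
      ∫ x, (1 + x ^ 2) ^ α * (f' x / f x + 2 * β * x / (1 + x ^ 2)) ^ 2 * f x := by
  have hfc : Continuous f := continuous_iff_continuousAt.2 fun x => (hf x).continuousAt
  have hint : Integrable f := integrable_of_integral_eq_one h1
  have hqpos : ∀ x : ℝ, 0 < C / (1 + x ^ 2) ^ β := fun x =>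
    div_pos hC (Real.rpow_pos_of_pos (kpos x) _)
  obtain ⟨T, hT⟩ := transport_exists f (fun x => C / (1 + x ^ 2) ^ β) hfc hpos h1
    (continuous_const.div (cont_pow β) fun x => (Real.rpow_pos_of_pos (kpos x) _).ne') hqpos hnorm
  set G : ℝ → ℝ := fun x => f x * ((1 + x ^ 2) ^ (α / 2) * (Y α (T x) - Y α x)) with hG
  have hGd : ∀ x, ∃ g', HasDerivAt G g' x ∧
      f x * Real.log (f x / (C / (1 + x ^ 2) ^ β)) - (1 / (2 * ρ)) *
      ((1 + x ^ 2) ^ α * (f' x / f x + 2 * β * x / (1 + x ^ 2)) ^ 2 * f x) ≤ g' := by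
    intro x
    have k := kpos x
    have kT := kpos (T x)
    have hd := (hf x).mul ((hasDeriv_pow (α / 2) x).mul
      (((hasDeriv_Y α (T x)).comp x (hT x)).sub (hasDeriv_Y α x)))
    refine ⟨_, hd, ?_⟩
    set t := f x / (C / (1 + T x ^ 2) ^ β) with ht
    have htpos : 0 < t := div_pos (hpos x) (hqpos _)
    set w := (1 + x ^ 2) ^ (α / 2) with hw
    have hwpos : 0 < w := Real.rpow_pos_of_pos k _
    have ew1 : (1 + x ^ 2) ^ (α / 2 - 1) = w / (1 + x ^ 2) := by
      rw [Real.rpow_sub_one k.ne']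
    have ew2 : (1 + x ^ 2) ^ (-(α / 2)) = w⁻¹ := by rw [Real.rpow_neg k.le]
    have ew3 : (1 + x ^ 2) ^ α = w ^ 2 := by
      rw [hw, ← Real.rpow_natCast ((1 + x ^ 2) ^ (α / 2)) 2, ← Real.rpow_mul k.le]; congr 1; push_cast; ring
    set iT := (1 + T x ^ 2) ^ (-(α / 2)) with hiT
    have hiTpos : 0 < iT := Real.rpow_pos_of_pos kT _
    have hlog : Real.log (f x / (C / (1 + x ^ 2) ^ β)) = Real.log (w * (iT * t))
        + (β - α / 2) * Real.log (1 + x ^ 2) - (β - α / 2) * Real.log (1 + T x ^ 2) := by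
      have hfx : f x = t * (C / (1 + T x ^ 2) ^ β) := by
        rw [ht, div_mul_cancel₀ _ (hqpos _).ne']
      have p1 := Real.rpow_pos_of_pos k β
      have p2 := Real.rpow_pos_of_pos kT β
      rw [Real.log_mul hwpos.ne' (by positivity), Real.log_mul hiTpos.ne' htpos.ne', hw, hiT,
        Real.log_rpow k, Real.log_rpow kT]
      rw [hfx, Real.log_div (by positivity) (by positivity), Real.log_mul htpos.ne' (by positivity),
        Real.log_div hC.ne' p1.ne', Real.log_div hC.ne' p2.ne', Real.log_rpow k, Real.log_rpow kT]
      ring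
    have hlog1 := Real.log_le_sub_one_of_pos (show 0 < w * (iT * t) by positivity)
    have hcv := convexity α β ρ hρ x (T x)
    rw [ew1] at hcv
    rw [ew3, ew1, ew2, hlog]
    set θ := Y α (T x) - Y α x with hθ
    set L := f' x / f x + 2 * β * x / (1 + x ^ 2) with hL
    have hf' : f' x = f x * (L - 2 * β * x / (1 + x ^ 2)) := by
      rw [hL]; have := (hpos x).ne'; field_simp; ring
    have hsq : 0 ≤ ρ / 2 * θ ^ 2 + θ * w * L + (1 / (2 * ρ)) * (w ^ 2 * L ^ 2) := by
      have : ρ / 2 * θ ^ 2 + θ * w * L + (1 / (2 * ρ)) * (w ^ 2 * L ^ 2)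
        = (1 / (2 * ρ)) * (ρ * θ + w * L) ^ 2 := by field_simp; ring
      rw [this]; positivity
    have hfin : Real.log (w * (iT * t))
        + (β - α / 2) * Real.log (1 + x ^ 2) - (β - α / 2) * Real.log (1 + T x ^ 2)
        - (1 / (2 * ρ)) * (w ^ 2 * L ^ 2) ≤
        w * (iT * t) - 1 - (2 * β - α) * x * (w / (1 + x ^ 2)) * θ + θ * w * L := by
      linarith
    have := mul_le_mul_of_nonneg_left hfin (hpos x).le
    refine le_trans (le_of_eq ?_) (this.trans (le_of_eq ?_))
    · ring
    · simp only [Function.comp, Pi.sub_apply, Pi.mul_apply]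
      rw [hf', ← hθ, ← hw]
      field_simp
      ring
  choose G' hG' hle using hGd
  set K := (2 : ℝ) ^ (α / 2) / (α - 1) with hK
  have hKpos : 0 < K := div_pos (by positivity) (by linarith)
  have hseq1 : ∀ n : ℕ, ∃ b : ℝ, ((n : ℝ) + 1 < b) ∧ b * f b < 1 / ((n : ℝ) + 1) := fun n =>
    exists_small f hint _ _ (by positivity) (by positivity)
  have hseq2 : ∀ n : ℕ, ∃ b : ℝ, ((n : ℝ) + 1 < b) ∧ b * f (-b) < 1 / ((n : ℝ) + 1) := fun n =>
    exists_small (fun x => f (-x)) hint.comp_neg _ _ (by positivity) (by positivity)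
  choose b hb1 hb2 using hseq1
  choose a ha1 ha2 using hseq2
  have hφ := hl.sub (hr.const_mul (1 / (2 * ρ)))
  have hbound : ∀ n : ℕ, (∫ x in (-a n)..(b n), (f x * Real.log (f x / (C / (1 + x ^ 2) ^ β))
      - (1 / (2 * ρ)) *
      ((1 + x ^ 2) ^ α * (f' x / f x + 2 * β * x / (1 + x ^ 2)) ^ 2 * f x)))
      ≤ 2 * K * (1 / ((n : ℝ) + 1)) := by
    intro n
    have hn : (0 : ℝ) ≤ n := by positivity
    have ha := ha1 n
    have hb := hb1 n
    have := intervalIntegral.integral_le_sub_of_hasDeriv_right_of_le (a := -a n) (b := b n)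
      (g := G) (g' := G') (by linarith)
      (fun x _ => (hG' x).continuousAt.continuousWithinAt)
      (fun x _ => (hG' x).hasDerivWithinAt) hφ.integrableOn (fun x _ => hle x)
    refine this.trans ?_
    have t1 : G (b n) ≤ K * (1 / ((n : ℝ) + 1)) := by
      have := mul_le_mul_of_nonneg_left (wY_tail α hα (b n) (T (b n)) (by linarith))
        (hpos (b n)).le
      have h2 := mul_le_mul_of_nonneg_left (hb2 n).le hKpos.le
      refine this.trans (le_trans (le_of_eq ?_) h2)
      ring
    have t2 : - G (-a n) ≤ K * (1 / ((n : ℝ) + 1)) := by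
      have := mul_le_mul_of_nonneg_left (wY_tail α hα (a n) (-T (-a n)) (by linarith))
        (hpos (-a n)).le
      have h2 := mul_le_mul_of_nonneg_left (ha2 n).le hKpos.le
      refine le_trans (le_of_eq ?_) (this.trans (le_trans (le_of_eq ?_) h2))
      · simp only [hG, Y_neg, neg_sq]; ring
      · ring
    linarith
  have hlim := intervalIntegral_tendsto_integral hφ (l := atTop) (a := fun n => -a n) (b := b)
    (tendsto_neg_atTop_atBot.comp (tendsto_atTop_mono (fun n => by linarith [ha1 n])
      tendsto_natCast_atTop_atTop))
    (tendsto_atTop_mono (fun n => by linarith [hb1 n]) tendsto_natCast_atTop_atTop)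
  have hlim2 : Tendsto (fun n : ℕ => 2 * K * (1 / ((n : ℝ) + 1))) atTop (𝓝 0) := by
    simpa using (tendsto_one_div_add_atTop_nhds_zero_nat (𝕜 := ℝ)).const_mul (2 * K)
  have := le_of_tendsto_of_tendsto' hlim hlim2 hbound
  rw [integral_sub' hl (hr.const_mul _), integral_const_mul] at this
  linarith

end CauchyLSI

namespace CauchyLSI

open InformationTheory

lemma final (β α : ℝ) (hα : 1 < α) (C : ℝ) (hC : 0 < C)
    (hnorm : ∫ x : ℝ, C / (1 + x ^ 2) ^ β = 1) (ρ : ℝ) (hρ0 : 0 < ρ)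
    (hρ : ∀ x : ℝ, ρ ≤ (2 * β - α) * ((1 + x ^ 2) ^ (α - 2) * (1 + (α - 1) * x ^ 2)))
    (f : ℝ → ℝ) (hf : ContDiff ℝ (⊤ : ℕ∞) f) (hfnonneg : ∀ x, 0 ≤ f x)
    (hfprob : ∫ x : ℝ, f x = 1)
    (hlhs : Integrable (fun x => f x * Real.log (f x / (C / (1 + x ^ 2) ^ β))))
    (hrhs : Integrable (fun x => (1 + x ^ 2) ^ α *
      (deriv (fun y => Real.log (f y / (C / (1 + y ^ 2) ^ β))) x) ^ 2 * f x)) :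
    (∫ x : ℝ, f x * Real.log (f x / (C / (1 + x ^ 2) ^ β)))
      ≤ (1 / (2 * ρ)) *
          ∫ x : ℝ, (1 + x ^ 2) ^ α *
            (deriv (fun y => Real.log (f y / (C / (1 + y ^ 2) ^ β))) x) ^ 2 * f x := by
  set q : ℝ → ℝ := fun x => C / (1 + x ^ 2) ^ β with hq
  have hqpos : ∀ x : ℝ, 0 < q x := fun x => div_pos hC (Real.rpow_pos_of_pos (kpos x) _)
  have hqc : Continuous q :=
    continuous_const.div (cont_pow β) fun x => (Real.rpow_pos_of_pos (kpos x) _).ne'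
  have hqd : ∀ x, HasDerivAt q (-(q x * (2 * β * x / (1 + x ^ 2)))) x := by
    intro x
    have k := kpos x
    have p := Real.rpow_pos_of_pos k β
    have := (hasDeriv_pow β x).fun_inv p.ne' |>.const_mul C
    have h2 : HasDerivAt q _ x := this
    refine h2.congr_deriv ?_
    rw [Real.rpow_sub_one k.ne']
    simp only [hq]
    field_simp
  have hfd : ∀ x, HasDerivAt f (deriv f x) x := fun x =>
    (hf.differentiable (by simp) x).hasDerivAt
  have hfc : Continuous f := hf.continuous
  have hf'c : Continuous (deriv f) := hf.continuous_deriv (by simp)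
  have hfi : Integrable f := integrable_of_integral_eq_one hfprob
  have hqi : Integrable q := integrable_of_integral_eq_one hnorm
  set R : ℝ → ℝ := fun x => (1 + x ^ 2) ^ α *
      (deriv (fun y => Real.log (f y / q y)) x) ^ 2 * f x with hR
  have hkl : ∀ u v : ℝ, 0 < v → v * klFun (u / v) = u * Real.log (u / v) + v - u := by
    intro u v hv
    rw [klFun_apply]; field_simp
  have hdom : Integrable (fun x => q x * klFun (f x / q x)) := by
    have : (fun x => q x * klFun (f x / q x)) = fun x => f x * Real.log (f x / q x) + q x - f x :=
      funext fun x => hkl _ _ (hqpos x)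
    rw [this]
    exact (hlhs.add hqi).sub hfi
  have hEnt : ∀ u : ℝ → ℝ, Integrable (fun x => u x * Real.log (u x / q x)) →
      (∫ x, u x = 1) →
      ∫ x, q x * klFun (u x / q x) = ∫ x, u x * Real.log (u x / q x) := by
    intro u hu hu1
    have : (fun x => q x * klFun (u x / q x)) = fun x => u x * Real.log (u x / q x) + q x - u x :=
      funext fun x => hkl _ _ (hqpos x)
    have hui : Integrable u := integrable_of_integral_eq_one hu1
    have e1 : ∫ x, (u x * Real.log (u x / q x) + q x) - u x
        = (∫ x, (u x * Real.log (u x / q x) + q x)) - ∫ x, u x := integral_sub (hu.add hqi) hui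
    have e2 : ∫ x, (u x * Real.log (u x / q x) + q x)
        = (∫ x, u x * Real.log (u x / q x)) + ∫ x, q x := integral_add hu hqi
    have e3 : ∫ x, q x = 1 := hnorm
    rw [this, e1, e2, hu1, e3]
    ring
  set fe : ℝ → ℝ → ℝ := fun ε x => (1 - ε) * f x + ε * q x with hfe
  have hdiv : ∀ ε x, fe ε x / q x = (1 - ε) * (f x / q x) + ε * 1 := by
    intro ε x
    have := (hqpos x).ne'
    simp only [hfe]; field_simp
  have hkl_le : ∀ ε, 0 < ε → ε < 1 → ∀ x,
      q x * klFun (fe ε x / q x) ≤ q x * klFun (f x / q x) := by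
    intro ε h0 h1 x
    apply mul_le_mul_of_nonneg_left _ (hqpos x).le
    have hg : 0 ≤ f x / q x := div_nonneg (hfnonneg x) (hqpos x).le
    have := convexOn_klFun.2 (mem_Ici.2 hg) (mem_Ici.2 zero_le_one)
      (show 0 ≤ 1 - ε by linarith) h0.le (by ring)
    simp only [smul_eq_mul, klFun_one, mul_zero, add_zero] at this
    rw [hdiv]
    have h2 := klFun_nonneg hg
    nlinarith
  have hkl_nn : ∀ ε, 0 < ε → ε < 1 → ∀ x, 0 ≤ q x * klFun (fe ε x / q x) := by
    intro ε h0 h1 x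
    apply mul_nonneg (hqpos x).le (klFun_nonneg _)
    have := hfnonneg x
    have := hqpos x
    have : 0 ≤ 1 - ε := by linarith
    simp only [hfe]; positivity
  have hfec : ∀ ε, Continuous (fe ε) := fun ε => by simp only [hfe]; fun_prop
  have hmeas : ∀ ε, AEStronglyMeasurable (fun x => q x * klFun (fe ε x / q x)) volume := by
    intro ε
    apply Continuous.aestronglyMeasurable
    exact hqc.mul (continuous_klFun.comp ((hfec ε).div hqc fun x => (hqpos x).ne'))
  have hstep : ∀ ε, 0 < ε → ε < 1 →
      ∫ x, q x * klFun (fe ε x / q x) ≤ (1 / (2 * ρ)) * ∫ x, R x := by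
    intro ε h0 h1
    have h1' : 0 < 1 - ε := by linarith
    have hfepos : ∀ x, 0 < fe ε x := by
      intro x
      have := hfnonneg x
      have := hqpos x
      simp only [hfe]; positivity
    have hfeint : ∫ x, fe ε x = 1 := by
      simp only [hfe]
      rw [integral_add (hfi.const_mul _) (hqi.const_mul _), integral_const_mul,
        integral_const_mul, hfprob, hnorm]; ring
    have hfei : Integrable (fe ε) := integrable_of_integral_eq_one hfeint
    have hfed : ∀ x, HasDerivAt (fe ε) ((1 - ε) * deriv f x
        + ε * (-(q x * (2 * β * x / (1 + x ^ 2))))) x := fun x =>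
      ((hfd x).const_mul _).add ((hqd x).const_mul _)
    have hkli : Integrable (fun x => q x * klFun (fe ε x / q x)) := by
      refine hdom.mono' (hmeas ε) (Eventually.of_forall fun x => ?_)
      rw [Real.norm_of_nonneg (hkl_nn ε h0 h1 x)]
      exact hkl_le ε h0 h1 x
    have hl : Integrable (fun x => fe ε x * Real.log (fe ε x / q x)) := by
      have : (fun x => fe ε x * Real.log (fe ε x / q x))
          = fun x => q x * klFun (fe ε x / q x) - q x + fe ε x := by
        funext x; rw [hkl _ _ (hqpos x)]; ring
      rw [this]
      exact (hkli.sub hqi).add hfei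
    have hRle : ∀ x, (1 + x ^ 2) ^ α * (((1 - ε) * deriv f x
        + ε * (-(q x * (2 * β * x / (1 + x ^ 2))))) / fe ε x + 2 * β * x / (1 + x ^ 2)) ^ 2 * fe ε x
        ≤ R x := by
      intro x
      have hfe0 := hfepos x
      have hW := Real.rpow_pos_of_pos (kpos x) α
      set s := 2 * β * x / (1 + x ^ 2) with hs
      have e1 : (((1 - ε) * deriv f x + ε * (-(q x * s))) / fe ε x + s) ^ 2 * fe ε x
          = ((1 - ε) * (deriv f x + s * f x)) ^ 2 / fe ε x := by
        have : ((1 - ε) * deriv f x + ε * (-(q x * s))) / fe ε x + s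
            = ((1 - ε) * (deriv f x + s * f x)) / fe ε x := by
          rw [eq_div_iff hfe0.ne', add_mul, div_mul_cancel₀ _ hfe0.ne']
          simp only [hfe]; ring
        rw [this]; field_simp
      rw [hR]; simp only
      rw [mul_assoc, mul_assoc, e1]
      apply mul_le_mul_of_nonneg_left _ hW.le
      rcases (hfnonneg x).eq_or_lt with h | h
      · have hmin : IsLocalMin f x := Eventually.of_forall fun y => by
          rw [← h]; exact hfnonneg y
        rw [hmin.deriv_eq_zero, ← h]; simp
      · have hd : deriv (fun y => Real.log (f y / q y)) x = deriv f x / f x + s := by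
          have hdd := ((hfd x).fun_div (hqd x) (hqpos x).ne').log (div_pos h (hqpos x)).ne'
          rw [← hs] at hdd
          rw [hdd.deriv]
          have := (hqpos x).ne'
          field_simp
          ring
        rw [hd]
        have e2 : (deriv f x / f x + s) ^ 2 * f x = (deriv f x + s * f x) ^ 2 / f x := by
          field_simp
        rw [e2, div_le_div_iff₀ hfe0 h]
        have : (1 - ε) ^ 2 * f x ≤ fe ε x := by
          have := hqpos x
          simp only [hfe]
          have : 0 < ε * q x := by positivity
          have : 0 < ε * (1 - ε) * f x := by positivity
          nlinarith
        calc _ = (deriv f x + s * f x) ^ 2 * ((1 - ε) ^ 2 * f x) := by ring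
          _ ≤ _ := mul_le_mul_of_nonneg_left this (sq_nonneg _)
    have hcR : Continuous fun x => (1 + x ^ 2) ^ α * (((1 - ε) * deriv f x
        + ε * (-(q x * (2 * β * x / (1 + x ^ 2))))) / fe ε x + 2 * β * x / (1 + x ^ 2)) ^ 2
          * fe ε x := by
      have hs : Continuous fun x : ℝ => 2 * β * x / (1 + x ^ 2) :=
        Continuous.div (by fun_prop) (by fun_prop) fun x => (kpos x).ne'
      have hn : Continuous fun x => ((1 - ε) * deriv f x
        + ε * (-(q x * (2 * β * x / (1 + x ^ 2))))) / fe ε x :=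
        Continuous.div (by fun_prop) (hfec ε) fun x => (hfepos x).ne'
      exact ((cont_pow α).mul ((hn.add hs).pow 2)).mul (hfec ε)
    have hr : Integrable fun x => (1 + x ^ 2) ^ α * (((1 - ε) * deriv f x
        + ε * (-(q x * (2 * β * x / (1 + x ^ 2))))) / fe ε x + 2 * β * x / (1 + x ^ 2)) ^ 2
          * fe ε x := by
      refine hrhs.mono' hcR.aestronglyMeasurable (Eventually.of_forall fun x => ?_)
      rw [Real.norm_of_nonneg]
      · exact hRle x
      · have := hfepos x
        have := Real.rpow_pos_of_pos (kpos x) α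
        positivity
    have hcore := core β α hα C hC hnorm ρ hρ0 hρ (fe ε) _ hfed hfepos hfeint hl hr
    rw [hEnt _ hl hfeint]
    refine hcore.trans ?_
    apply mul_le_mul_of_nonneg_left _ (by positivity)
    exact integral_mono hr hrhs hRle
  rw [← hEnt f hlhs hfprob]
  have hε : ∀ n : ℕ, 0 < 1 / ((n : ℝ) + 2) ∧ 1 / ((n : ℝ) + 2) < 1 := by
    intro n
    have : (0 : ℝ) ≤ n := by positivity
    refine ⟨by positivity, ?_⟩
    rw [div_lt_one (by positivity)]; linarith
  have hε0 : Tendsto (fun n : ℕ => 1 / ((n : ℝ) + 2)) atTop (𝓝 0) := by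
    simp only [one_div]
    exact tendsto_inv_atTop_zero.comp
      (tendsto_atTop_add_const_right _ _ tendsto_natCast_atTop_atTop)
  have hlim : Tendsto (fun n : ℕ => ∫ x, q x * klFun (fe (1 / ((n : ℝ) + 2)) x / q x)) atTop
      (𝓝 (∫ x, q x * klFun (f x / q x))) := by
    apply tendsto_integral_of_dominated_convergence _ (fun n => hmeas _) hdom
    · intro n
      refine Eventually.of_forall fun x => ?_
      rw [Real.norm_of_nonneg (hkl_nn _ (hε n).1 (hε n).2 x)]
      exact hkl_le _ (hε n).1 (hε n).2 x
    · refine Eventually.of_forall fun x => ?_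
      have hc : Continuous fun ε => q x * klFun (fe ε x / q x) := by
        simp only [hfe]
        exact continuous_const.mul (continuous_klFun.comp (by fun_prop))
      have := (hc.tendsto 0).comp hε0
      simpa [hfe, Function.comp_def] using this
  exact le_of_tendsto' hlim fun n => hstep _ (hε n).1 (hε n).2

end CauchyLSI

/-- **Weighted logarithmic Sobolev inequality for Cauchy-type densities,
relative-entropy form** (inequality (3.4)/(3.21)). Let `β > 1` and let
`f_β(x) = C_β/(1+x²)^β` be the Cauchy-type density on `ℝ`. For every `α` with
`1 < α < β` and every smooth probability density `f` on `ℝ` (automatically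
absolutely continuous with respect to the everywhere positive `f_β`),
`∫ f log(f/f_β) ≤ (1/(2ρ_{β,α})) ∫ (1+x²)^α ((log(f/f_β))')² f`, where
`ρ_{β,α} = (2β−α)((α−1)/(2−α))^{3−2α}` for `1 < α < 3/2` and `ρ_{β,α} = 2β−α`
for `3/2 ≤ α < β` (whenever the right-hand side is finite). -/
theorem log_sobolev_cauchy_type_relative_entropy
    (β α : ℝ) (hβ : 1 < β) (hα : 1 < α) (hαβ : α < β)
    (C : ℝ) (hC : 0 < C)
    (hnorm : ∫ x : ℝ, C / (1 + x ^ 2) ^ β = 1)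
    (f : ℝ → ℝ) (hf : ContDiff ℝ (⊤ : ℕ∞) f) (hfnonneg : ∀ x, 0 ≤ f x)
    (hfprob : ∫ x : ℝ, f x = 1)
    (hlhs : Integrable (fun x => f x * Real.log (f x / (C / (1 + x ^ 2) ^ β))))
    (hrhs : Integrable (fun x => (1 + x ^ 2) ^ α *
      (deriv (fun y => Real.log (f y / (C / (1 + y ^ 2) ^ β))) x) ^ 2 * f x)) :
    (∫ x : ℝ, f x * Real.log (f x / (C / (1 + x ^ 2) ^ β)))
      ≤ (1 / (2 * (if α < 3 / 2 then (2 * β - α) * ((α - 1) / (2 - α)) ^ (3 - 2 * α)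
            else 2 * β - α))) *
          ∫ x : ℝ, (1 + x ^ 2) ^ α *
            (deriv (fun y => Real.log (f y / (C / (1 + y ^ 2) ^ β))) x) ^ 2 * f x := by

  have hc : 0 < 2 * β - α := by linarith
  refine CauchyLSI.final β α hα C hC hnorm _ ?_ ?_ f hf hfnonneg hfprob hlhs hrhs
  · split_ifs with h
    · have : 0 < (α - 1) / (2 - α) := div_pos (by linarith) (by linarith)
      positivity
    · exact hc
  · intro x
    have := mul_le_mul_of_nonneg_left (CauchyLSI.rho_bound α (x ^ 2) hα (sq_nonneg x)) hc.le
    refine le_trans (le_of_eq ?_) this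
    split_ifs <;> simp
end
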